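/- arXiv:2107.03154 — 5 statements merged into one kernel-verified Lean document; each statement's English description precedes it below -/
import Mathlib

section
/- Let F be a free group, H ≤ F a subgroup, and g ∈ F. Then the homomorphism φ_g : H ∗ ⟨x⟩ → F is not injective if and only if there exists a finitely generated subgroup H' ≤ H such that the rank of the subgroup ⟨H', g⟩ generated by H' and g is at most the rank of H'. -/
open scoped Monoid.Coprod

variable {F : Type*}

/-- The canonical homomorphism `φ_g : H ∗ ⟨x⟩ → F` from the free product of `H` with an
infinite cyclic group (the free group on one generator `x`), restricting to the inclusion
`H ↪ F` and sending `x` to `g`. -/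
noncomputable def phi [Group F] (H : Subgroup F) (g : F) :
    (↥H ∗ FreeGroup Unit) →* F :=
  Monoid.Coprod.lift H.subtype (FreeGroup.lift fun _ => g)

/-- `g` depends on `H` (is algebraic over `H`) if `φ_g` is not injective. -/
def Depends [Group F] (H : Subgroup F) (g : F) : Prop :=
  ¬ Function.Injective (phi H g)

/-- `dep H`: the set of elements of `F` that depend on `H`. -/
def depSet [Group F] (H : Subgroup F) : Set F := {g | Depends H g}

/-- `Dep H`: the subgroup generated by the elements that depend on `H`. -/
noncomputable def DepSubgroup [Group F] (H : Subgroup F) : Subgroup F :=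
  Subgroup.closure (depSet H)

/-- The rank of a subgroup: the minimal cardinality of a generating set. For subgroups of
free groups this equals the cardinality of a free basis. -/
noncomputable def rk [Group F] (H : Subgroup F) : Cardinal :=
  ⨅ S : {S : Set F // Subgroup.closure S = H}, Cardinal.mk S.1

/-- A relation on a finite type that is functional in both directions extends to a permutation. -/
theorem exists_perm_extending_relation {α : Type*} [Finite α] {R : α → α → Prop}
    (hfun : ∀ i j j', R i j → R i j' → j = j') (hinj : ∀ i i' j, R i j → R i' j → i = i') :
    ∃ σ : Equiv.Perm α, ∀ i j, R i j → σ i = j := by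
  classical
  have := Fintype.ofFinite α
  let e : {i // ∃ j, R i j} ≃ {j // ∃ i, R i j} :=
    { toFun := fun i => ⟨i.2.choose, i, i.2.choose_spec⟩
      invFun := fun j => ⟨j.2.choose, j, j.2.choose_spec⟩
      left_inv := fun i => Subtype.ext <| hinj _ _ _
        (Exists.choose_spec (p := fun i' => R i' i.2.choose) ⟨i, i.2.choose_spec⟩)
        i.2.choose_spec
      right_inv := fun j => Subtype.ext <| hfun _ _ _
        (Exists.choose_spec (p := fun j' => R j.2.choose j') ⟨j, j.2.choose_spec⟩)
        j.2.choose_spec }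
  refine ⟨e.extendSubtype, fun i j hij => ?_⟩
  rw [e.extendSubtype_apply_of_mem i ⟨j, hij⟩]
  exact hfun _ _ _ (Exists.choose_spec (p := fun j' => R i j') ⟨j, hij⟩) hij

namespace FreeGroup

/-- Free groups are residually finite: a nontrivial element acts nontrivially on some finite
set. -/
theorem exists_hom_perm_fin_ne_one {α : Type*} {w : FreeGroup α} (hw : w ≠ 1) :
    ∃ (n : ℕ) (q : FreeGroup α →* Equiv.Perm (Fin n)), q w ≠ 1 := by
  classical
  set L := w.toWord
  have hred : ∀ (k : ℕ) (hk : k + 1 < L.length), L[k].1 = L[k + 1].1 → L[k].2 = L[k + 1].2 :=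
    fun k hk => List.isChain_iff_getElem.mp (isReduced_toWord (x := w)) k hk
  let R : α → Fin (L.length + 1) → Fin (L.length + 1) → Prop := fun a i j =>
    ∃ (k : ℕ) (hk : k < L.length), (L[k] = (a, true) ∧ i.1 = k + 1 ∧ j.1 = k) ∨
      (L[k] = (a, false) ∧ i.1 = k ∧ j.1 = k + 1)
  have hR : ∀ a, ∃ σ : Equiv.Perm (Fin (L.length + 1)), ∀ i j, R a i j → σ i = j := by
    intro a
    apply exists_perm_extending_relation
    · rintro ⟨i, hi⟩ ⟨j, hj⟩ ⟨j', hj'⟩ ⟨k, hk, h⟩ ⟨k', hk', h'⟩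
      grind
    · rintro ⟨i, hi⟩ ⟨i', hi'⟩ ⟨j, hj⟩ ⟨k, hk, h⟩ ⟨k', hk', h'⟩
      grind
  choose σ hσ using hR
  have key : ∀ k (hk : k ≤ L.length),
      ((L.drop k).map fun x => cond x.2 (σ x.1) (σ x.1)⁻¹).prod (Fin.last _) =
        ⟨k, Nat.lt_succ_of_le hk⟩ := by
    intro k hk
    induction hk using Nat.decreasingInduction with
    | self => simp [Fin.last]
    | of_succ k hk ih =>
      rw [List.drop_eq_getElem_cons hk, List.map_cons, List.prod_cons, Equiv.Perm.mul_apply, ih]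
      obtain ⟨⟨a, b⟩, hab⟩ : ∃ x, L[k] = x := ⟨_, rfl⟩
      rw [hab]
      cases b
      · refine (Equiv.Perm.inv_eq_iff_eq).mpr (hσ a _ _ ⟨k, hk, Or.inr ⟨hab, rfl, rfl⟩⟩).symm
      · exact hσ a _ _ ⟨k, hk, Or.inl ⟨hab, rfl, rfl⟩⟩
  refine ⟨L.length + 1, lift σ, fun h => hw ?_⟩
  have h0 := key 0 (Nat.zero_le _)
  rw [List.drop_zero, ← lift_mk, show mk L = w from mk_toWord, h] at h0
  have hlen : L.length = 0 := congrArg Fin.val h0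
  exact toWord_eq_nil_iff.mp (List.length_eq_zero_iff.mp hlen)

/-- Free groups of finite rank are Hopfian. -/
theorem injective_of_surjective_endomorphism {α : Type*} [Finite α]
    {f : FreeGroup α →* FreeGroup α} (hf : Function.Surjective f) : Function.Injective f := by
  rw [injective_iff_map_eq_one]
  intro w hw
  by_contra hne
  obtain ⟨n, q, hq⟩ := exists_hom_perm_fin_ne_one hne
  have : Finite (FreeGroup α →* Equiv.Perm (Fin n)) := Finite.of_equiv _ lift
  obtain ⟨q', rfl⟩ := Finite.surjective_of_injective
    (f := fun q : FreeGroup α →* Equiv.Perm (Fin n) => q.comp f)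
    (fun _ _ h => (MonoidHom.cancel_right hf).mp h) q
  exact hq (by simp [hw])

/-- A surjection between free groups does not increase a finite rank. -/
theorem card_le_of_surjective {α β : Type*} [Finite α] {f : FreeGroup α →* FreeGroup β}
    (hf : Function.Surjective f) : Finite β ∧ Nat.card β ≤ Nat.card α := by
  let Q := Multiplicative (ZMod 2)
  have hQ : Nat.card Q = 2 := Nat.card_zmod 2
  have : Finite Q := inferInstanceAs (Finite (ZMod 2))
  let r : (β → Q) → (α → Q) := fun u => lift.symm ((lift u).comp f)
  have hr : Function.Injective r := fun u v h =>
    lift.injective ((MonoidHom.cancel_right hf).mp (lift.symm.injective h))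
  have : Finite (β → Q) := Finite.of_injective r hr
  have : Finite β := by
    classical
    refine Finite.of_injective (fun b : β => (Pi.mulSingle b (Multiplicative.ofAdd 1) : β → Q)) ?_
    intro b c h
    by_contra hbc
    have := congrFun h b
    simp [Pi.mulSingle_eq_of_ne hbc] at this
    exact absurd this (by decide)
  refine ⟨this, ?_⟩
  have hle := Nat.card_le_card_of_injective r hr
  rw [Nat.card_fun, Nat.card_fun, hQ] at hle
  exact (Nat.pow_le_pow_iff_right one_lt_two).mp hle

/-- If the range of an injective homomorphism from `FreeGroup β` is the range of a homomorphism
from `FreeGroup α`, then the latter factors through a surjection `FreeGroup α →* FreeGroup β`. -/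
theorem exists_surjective_comp_eq {α β G : Type*} [Group G] {θ : FreeGroup α →* G}
    {ψ : FreeGroup β →* G} (hψ : Function.Injective ψ) (h : ψ.range = θ.range) :
    ∃ f : FreeGroup α →* FreeGroup β, Function.Surjective f ∧ ψ.comp f = θ := by
  have hmem : ∀ w, θ w ∈ ψ.range := fun w => h ▸ ⟨w, rfl⟩
  let f := (MonoidHom.ofInjective hψ).symm.toMonoidHom.comp (θ.codRestrict ψ.range hmem)
  have hf : ∀ w, ψ (f w) = θ w := fun w => MonoidHom.apply_ofInjective_symm hψ ⟨θ w, hmem w⟩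
  refine ⟨f, fun v => ?_, MonoidHom.ext hf⟩
  obtain ⟨w, hw⟩ : ψ v ∈ θ.range := h ▸ ⟨v, rfl⟩
  exact ⟨w, hψ ((hf w).trans hw)⟩

/-- The free group on a disjoint sum is the free product of the free groups. -/
def sumEquivCoprod (α β : Type*) : FreeGroup (α ⊕ β) ≃* FreeGroup α ∗ FreeGroup β :=
  MonoidHom.toMulEquiv
    (lift (Sum.elim (fun a => Monoid.Coprod.inl (of a)) fun b => Monoid.Coprod.inr (of b)))
    (Monoid.Coprod.lift (FreeGroup.map Sum.inl) (FreeGroup.map Sum.inr))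
    (by ext (a | b) <;> simp)
    (by ext <;> simp)

end FreeGroup

/-- The free product of an injective homomorphism with an identity is injective. -/
theorem Monoid.Coprod.map_id_injective {A B C : Type*} [Group A] [Group B] [Group C]
    {f : A →* B} (hf : Function.Injective f) :
    Function.Injective (Monoid.Coprod.map f (MonoidHom.id C)) := by
  obtain ⟨T, hT, -⟩ :=
    (Monoid.Coprod.inl : A →* A ∗ C).range.exists_isComplement_right 1
  let i := MonoidHom.ofInjective (Monoid.Coprod.inl_injective (M := A) (N := C))
  let e : A ∗ C ≃ A × T := hT.equiv.trans (i.symm.toEquiv.prodCongr (Equiv.refl _))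
  have he : ∀ a p, e (Monoid.Coprod.inl a * p) = (a * (e p).1, (e p).2) := by
    intro a p
    have h := hT.equiv_mul_left (i a) p
    change (i.symm (hT.equiv ((i a : A ∗ C) * p)).1, (hT.equiv ((i a : A ∗ C) * p)).2) = _
    rw [h, map_mul, i.symm_apply_apply]
    rfl
  let j : A ∗ C ↪ B × T := e.toEmbedding.trans ⟨Prod.map f id, hf.prodMap Function.injective_id⟩
  let actB : B →* Equiv.Perm (B × T) :=
    { toFun := fun b => (Equiv.mulLeft b).prodCongr (Equiv.refl T)
      map_one' := by ext <;> simp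
      map_mul' := fun b b' => by ext <;> simp [mul_assoc] }
  let actC : C →* Equiv.Perm (B × T) :=
    (Equiv.Perm.viaEmbeddingHom j).comp
      ((MulAction.toPermHom (A ∗ C) (A ∗ C)).comp Monoid.Coprod.inr)
  let act := (Monoid.Coprod.lift actB actC).comp (Monoid.Coprod.map f (MonoidHom.id C))
  have key : ∀ w p, act w (j p) = j (w * p) := by
    intro w
    induction w using Monoid.Coprod.induction_on with
    | inl a =>
      intro p
      simp only [act, MonoidHom.comp_apply, Monoid.Coprod.map_apply_inl,
        Monoid.Coprod.lift_apply_inl]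
      change (f a * f (e p).1, (e p).2) = (f (e _).1, (e _).2)
      rw [he, map_mul]
    | inr c =>
      intro p
      simp only [act, MonoidHom.comp_apply, Monoid.Coprod.map_apply_inr,
        Monoid.Coprod.lift_apply_inr]
      exact Equiv.Perm.viaEmbedding_apply _ j p
    | mul x y hx hy =>
      intro p
      rw [map_mul, Equiv.Perm.mul_apply, hy, hx, mul_assoc]
  rw [injective_iff_map_eq_one]
  intro w hw
  have h := key w 1
  rw [show act w = 1 by simp [act, hw], mul_one] at h
  exact (j.injective h).symm

/-- Every element of a free product `H ∗ C` comes from `K ∗ C` for a finitely generated subgroup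
`K` of `H`. -/
theorem Monoid.Coprod.exists_fg_mem_range_map {G C : Type*} [Group G] [Group C] {H : Subgroup G}
    (w : H ∗ C) : ∃ (K : Subgroup G) (hK : K ≤ H), K.FG ∧
      w ∈ (Monoid.Coprod.map (Subgroup.inclusion hK) (MonoidHom.id C)).range := by
  have mono : ∀ {K L : Subgroup G} (hK : K ≤ H) (hL : L ≤ H), K ≤ L →
      (Monoid.Coprod.map (Subgroup.inclusion hK) (MonoidHom.id C)).range ≤
        (Monoid.Coprod.map (Subgroup.inclusion hL) (MonoidHom.id C)).range := by
    rintro K L hK hL hKL _ ⟨v, rfl⟩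
    refine ⟨Monoid.Coprod.map (Subgroup.inclusion hKL) (MonoidHom.id C) v, ?_⟩
    rw [← MonoidHom.comp_apply, Monoid.Coprod.map_comp_map]
    rfl
  induction w using Monoid.Coprod.induction_on with
  | inl h =>
    refine ⟨Subgroup.closure {h.1}, by simp, ⟨{h.1}, by simp⟩,
      Monoid.Coprod.inl ⟨h.1, Subgroup.subset_closure rfl⟩, ?_⟩
    rw [Monoid.Coprod.map_apply_inl]
    rfl
  | inr c => exact ⟨⊥, bot_le, Subgroup.FG.bot, Monoid.Coprod.inr c, by simp⟩
  | mul x y hx hy =>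
    obtain ⟨K, hK, hKfg, hx⟩ := hx
    obtain ⟨L, hL, hLfg, hy⟩ := hy
    exact ⟨K ⊔ L, sup_le hK hL, hKfg.sup hLfg,
      mul_mem (mono hK (sup_le hK hL) le_sup_left hx) (mono hL (sup_le hK hL) le_sup_right hy)⟩

theorem phi_comp_map_inclusion [Group F] {K H : Subgroup F} (hK : K ≤ H) (g : F) :
    (phi H g).comp (Monoid.Coprod.map (Subgroup.inclusion hK) (MonoidHom.id _)) = phi K g := by
  ext <;> simp [phi]

theorem range_phi [Group F] (H : Subgroup F) (g : F) :
    (phi H g).range = H ⊔ Subgroup.closure {g} := by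
  rw [phi, Monoid.Coprod.range_lift, H.range_subtype, FreeGroup.range_lift_eq_closure,
    Set.range_const]

/-- The rank of a finitely generated free subgroup is the cardinality of any free basis. -/
theorem rk_range_eq_card [Group F] {β : Type*} {ψ : FreeGroup β →* F}
    (hψ : Function.Injective ψ) (hfg : ψ.range.FG) :
    Finite β ∧ rk ψ.range = (Nat.card β : Cardinal) := by
  have bound : ∀ S : Set F, Subgroup.closure S = ψ.range → S.Finite →
      Finite β ∧ Nat.card β ≤ Nat.card S := by
    intro S hS hfin
    have : Finite S := hfin
    obtain ⟨f, hf, -⟩ := FreeGroup.exists_surjective_comp_eq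
      (θ := FreeGroup.lift ((↑) : S → F)) hψ
      (by rw [FreeGroup.range_lift_eq_closure, Subtype.range_coe, hS])
    exact FreeGroup.card_le_of_surjective hf
  obtain ⟨S₀, hS₀⟩ := hfg
  have hβ : Finite β := (bound S₀ hS₀ S₀.finite_toSet).1
  have hgen : Subgroup.closure (Set.range fun b => ψ (FreeGroup.of b)) = ψ.range := by
    rw [← FreeGroup.range_lift_eq_closure]
    congr 1
    ext b
    simp
  have : Nonempty {S : Set F // Subgroup.closure S = ψ.range} := ⟨⟨_, hgen⟩⟩
  refine ⟨hβ, le_antisymm ?_ (le_ciInf fun S => ?_)⟩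
  · refine (ciInf_le' _ ⟨_, hgen⟩).trans ?_
    have hle := Finite.card_range_le fun b => ψ (FreeGroup.of b)
    rw [← Nat.cast_card]
    exact_mod_cast hle
  · by_cases hfin : S.1.Finite
    · have : Finite S.1 := hfin
      rw [← Nat.cast_card]
      exact_mod_cast (bound S.1 S.2 hfin).2
    · have : Infinite S.1 := Set.infinite_coe_iff.mpr hfin
      exact Cardinal.natCast_lt_aleph0.le.trans (Cardinal.aleph0_le_mk _)

theorem MonoidHom.range_comp_mulEquiv_toMonoidHom {A B C : Type*} [Group A] [Group B] [Group C]
    (f : B →* C) (e : A ≃* B) : (f.comp e.toMonoidHom).range = f.range :=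
  SetLike.coe_injective (e.surjective.range_comp f)

/-- A basis `X` of a finitely generated subgroup `H` of a free group, in the form of an isomorphism
from the free group on `X` and one more letter onto `H ∗ ⟨x⟩`. -/
theorem exists_basis_coprod.{u} {F : Type u} [Group F] [IsFreeGroup F] {H : Subgroup F}
    (hH : H.FG) :
    ∃ (X : Type u) (_ : FreeGroup (X ⊕ Unit) ≃* ↥H ∗ FreeGroup Unit),
      Finite X ∧ rk H = (Nat.card X : Cardinal) := by
  let m := IsFreeGroup.mulEquiv H
  let ψ := H.subtype.comp m.toMonoidHom
  have hψ : ψ.range = H := by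
    rw [MonoidHom.range_comp_mulEquiv_toMonoidHom, H.range_subtype]
  have h := rk_range_eq_card (ψ := ψ) (H.subtype_injective.comp m.injective) (hψ.symm ▸ hH)
  rw [hψ] at h
  exact ⟨_, (FreeGroup.sumEquivCoprod _ _).trans (MulEquiv.coprodCongr m (MulEquiv.refl _)), h⟩

/-- If `φ_g` is injective, adjoining `g` to a finitely generated `H` raises the rank. -/
theorem rk_lt_rk_sup_closure_of_injective_phi [Group F] [IsFreeGroup F] {H : Subgroup F} {g : F}
    (hH : H.FG) (hφ : Function.Injective (phi H g)) :
    rk H < rk (H ⊔ Subgroup.closure {g}) := by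
  obtain ⟨X, e, hX, hrk⟩ := exists_basis_coprod hH
  let ψ := (phi H g).comp e.toMonoidHom
  have hψ : ψ.range = H ⊔ Subgroup.closure {g} := by
    rw [MonoidHom.range_comp_mulEquiv_toMonoidHom, range_phi]
  have h := (rk_range_eq_card (ψ := ψ) (hφ.comp e.injective)
    (hψ.symm ▸ hH.sup ⟨{g}, by simp⟩)).2
  rw [← hψ, h, hrk, Nat.card_sum]
  simp

/-- If `φ_g` is not injective, adjoining `g` to a finitely generated `H` does not raise the rank. -/
theorem rk_sup_closure_le_of_not_injective_phi [Group F] [IsFreeGroup F] {H : Subgroup F} {g : F}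
    (hH : H.FG) (hφ : ¬ Function.Injective (phi H g)) :
    rk (H ⊔ Subgroup.closure {g}) ≤ rk H := by
  obtain ⟨X, e, hX, hrk⟩ := exists_basis_coprod hH
  let θ := (phi H g).comp e.toMonoidHom
  have hθ : θ.range = H ⊔ Subgroup.closure {g} := by
    rw [MonoidHom.range_comp_mulEquiv_toMonoidHom, range_phi]
  let m := IsFreeGroup.mulEquiv θ.range
  let ψ := θ.range.subtype.comp m.toMonoidHom
  have hψinj : Function.Injective ψ := θ.range.subtype_injective.comp m.injective
  have hψ : ψ.range = θ.range := by
    rw [MonoidHom.range_comp_mulEquiv_toMonoidHom, Subgroup.range_subtype]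
  obtain ⟨f, hf, hfθ⟩ := FreeGroup.exists_surjective_comp_eq hψinj hψ
  obtain ⟨hY, hcard⟩ := FreeGroup.card_le_of_surjective hf
  have hY_rk := (rk_range_eq_card hψinj
    (hψ.trans hθ ▸ hH.sup ⟨{g}, by simp⟩)).2
  rw [← hθ, ← hψ, hY_rk, hrk, Nat.cast_le]
  by_contra! hlt
  have heq : Nat.card (IsFreeGroup.Generators θ.range) = Nat.card (X ⊕ Unit) := by
    refine le_antisymm hcard ?_
    rw [Nat.card_sum, Nat.card_unique (α := Unit)]
    exact hlt
  let c := FreeGroup.freeGroupCongr (Finite.card_eq.mp heq).some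
  have hf_inj : Function.Injective f := by
    have h := FreeGroup.injective_of_surjective_endomorphism (f := c.toMonoidHom.comp f)
      (c.surjective.comp hf)
    exact Function.Injective.of_comp h
  have hθ_inj : Function.Injective θ := hfθ ▸ hψinj.comp hf_inj
  refine hφ ?_
  have h := hθ_inj.comp e.symm.injective
  convert h using 1
  ext w
  simp [θ]

/-- `φ_g` is not injective iff there is a finitely generated `H' ≤ H` with
`rank ⟨H', g⟩ ≤ rank H'`. -/
theorem dependence_iff_fg_subgroup_rank [Group F] [IsFreeGroup F] (H : Subgroup F) (g : F) :
    ¬ Function.Injective (phi H g) ↔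
      ∃ H' : Subgroup F, H' ≤ H ∧ H'.FG ∧
        rk (H' ⊔ Subgroup.closure {g}) ≤ rk H' := by
  constructor
  · intro hφ
    rw [injective_iff_map_eq_one] at hφ
    push Not at hφ
    obtain ⟨w, hw, hw1⟩ := hφ
    obtain ⟨K, hK, hKfg, v, rfl⟩ := Monoid.Coprod.exists_fg_mem_range_map w
    rw [← MonoidHom.comp_apply, phi_comp_map_inclusion] at hw
    refine ⟨K, hK, hKfg, ?_⟩
    exact rk_sup_closure_le_of_not_injective_phi hKfg fun h =>
      hw1 (by rw [h (hw.trans (map_one _).symm), map_one])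
  · rintro ⟨K, hK, hKfg, hrk⟩ hφ
    refine (rk_lt_rk_sup_closure_of_injective_phi hKfg ?_).not_ge hrk
    rw [← phi_comp_map_inclusion hK]
    exact hφ.comp (Monoid.Coprod.map_id_injective (Subgroup.inclusion_injective hK))
end

section
/- Let H be a finitely generated subgroup of a free group F. Then the rank of Dep(H), the subgroup of F generated by all elements of F that depend on H, is at most the rank of H. -/
open scoped Monoid.Coprod

variable {F : Type*}

namespace FreeGroup

variable {α β : Type*}

/-- Every nontrivial element of a free group acts nontrivially in some finite permutation
representation. -/
theorem exists_finite_perm_ne_one (w : FreeGroup α) (hw : w ≠ 1) :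
    ∃ (T : Set (FreeGroup α)) (_ : T.Finite) (f : FreeGroup α →* Equiv.Perm T), f w ≠ 1 := by
  classical
  let T : Set (FreeGroup α) := {x | ∃ L ∈ w.toWord.tails, mk L = x}
  have hT : T.Finite := (List.finite_toSet w.toWord.tails).image mk
  have : Finite T := hT
  have step (a : α) : ∃ σ : Equiv.Perm T, ∀ x y : T, (y : FreeGroup α) = of a * x → σ x = y := by
    let e : {x : T // of a * (x : FreeGroup α) ∈ T} ≃ {x : T // (of a)⁻¹ * (x : FreeGroup α) ∈ T} :=
      { toFun := fun x => ⟨⟨of a * x.1, x.2⟩, by simp⟩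
        invFun := fun x => ⟨⟨(of a)⁻¹ * x.1, x.2⟩, by simp⟩
        left_inv := fun x => by simp
        right_inv := fun x => by simp }
    refine ⟨e.extendSubtype, fun x y h => ?_⟩
    rw [Equiv.extendSubtype_apply_of_mem e x (h ▸ y.2)]
    exact Subtype.ext h.symm
  choose σ hσ using step
  have h1 : (1 : FreeGroup α) ∈ T := ⟨[], by simp, rfl⟩
  have key : ∀ L : List (α × Bool), L <:+ w.toWord →
      (lift σ (mk L) ⟨1, h1⟩ : FreeGroup α) = mk L := by
    intro L
    induction L with
    | nil => intro _; simp [← one_eq_mk]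
    | cons p L ih =>
      intro hL
      have hL' : L <:+ w.toWord := (List.suffix_cons p L).trans hL
      have hx : mk L ∈ T := ⟨L, by simpa using hL', rfl⟩
      have hy : mk (p :: L) ∈ T := ⟨_, by simpa using hL, rfl⟩
      have ih' : lift σ (mk L) ⟨1, h1⟩ = ⟨mk L, hx⟩ := Subtype.ext (ih hL')
      have hmk : mk (p :: L) = mk [p] * mk L := by simp
      rw [hmk, _root_.map_mul, Equiv.Perm.mul_apply, ih', ← hmk]
      obtain ⟨a, b⟩ := p
      have : lift σ (mk [(a, b)]) ⟨mk L, hx⟩ = ⟨mk ((a, b) :: L), hy⟩ := by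
        cases b
        · have h := hσ a ⟨mk ((a, false) :: L), hy⟩ ⟨mk L, hx⟩
            (mul_inv_cancel_left (of a) (mk L)).symm
          simp [← h]
        · simpa using hσ a ⟨mk L, hx⟩ ⟨mk ((a, true) :: L), hy⟩ hmk
      rw [this]
  refine ⟨T, hT, lift σ, fun h => hw ?_⟩
  have := key w.toWord List.suffix_rfl
  rw [mk_toWord, h] at this
  exact this.symm

/-- Free groups of finite rank are Hopfian. -/
theorem injective_of_surjective_endo [Finite α] (f : FreeGroup α →* FreeGroup α)
    (hf : Function.Surjective f) : Function.Injective f := by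
  rw [injective_iff_map_eq_one]
  intro w hw
  by_contra hne
  obtain ⟨T, hT, ρ, hρ⟩ := exists_finite_perm_ne_one w hne
  have : Finite T := hT
  have : Finite (FreeGroup α →* Equiv.Perm T) := Finite.of_equiv _ lift
  have hinj : Function.Injective fun r : FreeGroup α →* Equiv.Perm T => r.comp f :=
    fun r s h => (MonoidHom.cancel_right hf).1 h
  obtain ⟨r, hr⟩ := (Finite.injective_iff_surjective.1 hinj) ρ
  apply hρ
  rw [← hr]
  simp [hw]

/-- The retraction of free groups induced by an embedding of generators; generators outside the
image are sent to `1`. -/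
noncomputable def retraction (e : α ↪ β) : FreeGroup β →* FreeGroup α :=
  lift (Function.extend e of 1)

theorem retraction_of (e : α ↪ β) (a : α) : retraction e (of (e a)) = of a := by
  simp [retraction, e.injective.extend_apply]

theorem retraction_surjective (e : α ↪ β) : Function.Surjective (retraction e) := by
  have : (retraction e).comp (map e) = MonoidHom.id _ := by
    ext a; simp [retraction_of]
  exact fun x => ⟨map e x, DFunLike.congr_fun this x⟩

theorem not_surjective_fin_succ (n : ℕ) (f : FreeGroup (Fin n) →* FreeGroup (Fin (n + 1))) :
    ¬ Function.Surjective f := by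
  intro hf
  have hinj := injective_of_surjective_endo (f.comp (retraction Fin.castSuccEmb))
    (hf.comp (retraction_surjective Fin.castSuccEmb))
  have h : f.comp (retraction Fin.castSuccEmb) (of (Fin.last n)) = 1 := by
    simp [retraction]
  exact of_ne_one _ (hinj (h.trans (_root_.map_one _).symm))

end FreeGroup

namespace IsFreeGroup

/-- A free group is either a quotient of, or of rank larger than, the free group of rank `n`. -/
theorem exists_surjective_or (G : Type*) [Group G] [IsFreeGroup G] (n : ℕ) :
    (∃ f : FreeGroup (Fin n) →* G, Function.Surjective f) ∨
      ∃ f : G →* FreeGroup (Fin (n + 1)), Function.Surjective f := by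
  classical
  by_cases h : Nonempty (Fin (n + 1) ↪ Generators G)
  · obtain ⟨e⟩ := h
    exact .inr ⟨(FreeGroup.retraction e).comp (toFreeGroup G).toMonoidHom,
      (FreeGroup.retraction_surjective e).comp (toFreeGroup G).surjective⟩
  · have : Finite (Generators G) := by
      by_contra hinf
      rw [not_finite_iff_infinite] at hinf
      exact h ⟨Fin.valEmbedding.trans (Infinite.natEmbedding _)⟩
    have := Fintype.ofFinite (Generators G)
    have hcard : Fintype.card (Generators G) ≤ Fintype.card (Fin n) := by
      by_contra hlt
      exact h (Function.Embedding.nonempty_of_card_le (by simp at hlt ⊢; omega))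
    obtain ⟨e⟩ := Function.Embedding.nonempty_of_card_le hcard
    exact .inl ⟨(mulEquiv G).toMonoidHom.comp (FreeGroup.retraction e),
      (mulEquiv G).surjective.comp (FreeGroup.retraction_surjective e)⟩

end IsFreeGroup

namespace Monoid.Coprod

/-- The free product of an injective homomorphism with the identity is injective. -/
theorem map_id_injective_s3 {A B C : Type*} [Group A] [Group B] [Group C] (f : A →* B)
    (hf : Function.Injective f) : Function.Injective (map f (MonoidHom.id C)) := by
  let R : Subgroup (A ∗ C) := (inl : A →* A ∗ C).range
  let Q := Quotient (QuotientGroup.rightRel R)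
  let ι : (A ∗ C) ↪ Q × B :=
    { toFun := fun x => (Quotient.mk _ x, f (fst x))
      inj' := by
        intro x y h
        obtain ⟨h₁, h₂⟩ := Prod.ext_iff.1 h
        obtain ⟨a, ha⟩ := QuotientGroup.rightRel_apply.1 (Quotient.exact h₁)
        have hy : y = inl a * x := by rw [ha]; group
        have : fst x = a * fst x := by simpa [hy] using hf h₂
        rw [hy, right_eq_mul.1 this, map_one, one_mul] }
  let ρ : B →* Equiv.Perm (Q × B) :=
    { toFun := fun b => Equiv.prodCongr (Equiv.refl Q) (Equiv.mulLeft b)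
      map_one' := by ext x <;> simp
      map_mul' := fun b c => by ext x <;> simp [mul_assoc] }
  let τ : C →* Equiv.Perm (Q × B) :=
    (Equiv.Perm.viaEmbeddingHom ι).comp ((MulAction.toPermHom (A ∗ C) (A ∗ C)).comp inr)
  have key (w : A ∗ C) : ∀ x, lift ρ τ (map f (MonoidHom.id C) w) (ι x) = ι (w * x) := by
    induction w using induction_on with
    | inl a =>
      intro x
      refine Prod.ext (Quotient.sound (QuotientGroup.rightRel_apply.2 ?_)) ?_
      · exact ⟨a, (mul_inv_cancel_right _ _).symm⟩
      · change f a * f (fst x) = f (fst (inl a * x))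
        simp
    | inr c =>
      intro x
      simp [τ, Equiv.Perm.viaEmbeddingHom_apply, Equiv.Perm.viaEmbedding_apply]
    | mul v w hv hw =>
      intro x
      rw [map_mul, map_mul, Equiv.Perm.mul_apply, hw, hv, mul_assoc]
  rw [injective_iff_map_eq_one]
  intro w hw
  have := key w 1
  rw [hw, map_one, Equiv.Perm.one_apply, mul_one] at this
  exact (ι.injective this).symm

end Monoid.Coprod

section Dependence

variable [Group F]

theorem Depends.mono {H K : Subgroup F} (h : H ≤ K) {g : F} (hg : Depends H g) :
    Depends K g := by
  intro hK
  have hcomp : (phi K g).comp (Monoid.Coprod.map (Subgroup.inclusion h) (MonoidHom.id _)) =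
      phi H g := by
    apply Monoid.Coprod.hom_ext <;> ext <;> simp [phi]
  apply hg
  rw [← hcomp]
  exact hK.comp (Monoid.Coprod.map_id_injective_s3 _ (Subgroup.inclusion_injective h))

/-- Adjoining a dependent element to an `n`-generated subgroup of a free group yields an
`n`-generated subgroup. -/
theorem Depends.exists_range_eq_sup [IsFreeGroup F] {n : ℕ} {H : Subgroup F} {g : F}
    (hg : Depends H g) (hH : ∃ f : FreeGroup (Fin n) →* F, f.range = H) :
    ∃ f : FreeGroup (Fin n) →* F, f.range = H ⊔ Subgroup.closure {g} := by
  obtain ⟨f, rfl⟩ := hH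
  let q : FreeGroup (Fin (n + 1)) →* ↥f.range ∗ FreeGroup Unit :=
    FreeGroup.lift (Fin.lastCases (Monoid.Coprod.inr (FreeGroup.of ()))
      fun i => Monoid.Coprod.inl (f.rangeRestrict (FreeGroup.of i)))
  have hq : Function.Surjective q := by
    have hl : q.comp (FreeGroup.map Fin.castSucc) = Monoid.Coprod.inl.comp f.rangeRestrict := by
      ext i; simp [q]
    rw [← MonoidHom.range_eq_top, ← top_le_iff, ← Monoid.Coprod.range_inl_sup_range_inr, sup_le_iff]
    constructor
    · rintro _ ⟨x, rfl⟩
      obtain ⟨y, rfl⟩ := f.rangeRestrict_surjective x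
      exact ⟨_, DFunLike.congr_fun hl y⟩
    · have hr : q.comp (FreeGroup.map fun _ => Fin.last n) = Monoid.Coprod.inr := by
        ext i; simp [q]
      rintro _ ⟨x, rfl⟩
      exact ⟨_, DFunLike.congr_fun hr x⟩
  have hrange : (phi f.range g).range = f.range ⊔ Subgroup.closure {g} := by
    rw [phi, Monoid.Coprod.range_lift, Subgroup.range_subtype, FreeGroup.range_lift_eq_closure,
      Set.range_const]
  rw [← hrange]
  rcases IsFreeGroup.exists_surjective_or (phi f.range g).range n with ⟨s, hs⟩ | ⟨s, hs⟩
  · refine ⟨(phi f.range g).range.subtype.comp s, ?_⟩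
    rw [MonoidHom.range_comp, MonoidHom.range_eq_top.2 hs, ← MonoidHom.range_eq_map,
      Subgroup.range_subtype]
  · refine absurd ?_ hg
    have hinj := FreeGroup.injective_of_surjective_endo
      (s.comp ((phi f.range g).rangeRestrict.comp q))
      (hs.comp ((phi f.range g).rangeRestrict_surjective.comp hq))
    intro x y hxy
    obtain ⟨x, rfl⟩ := hq x
    obtain ⟨y, rfl⟩ := hq y
    have : (phi f.range g).rangeRestrict (q x) = (phi f.range g).rangeRestrict (q y) :=
      Subtype.ext hxy
    exact congrArg q (hinj (by simp [this]))

theorem exists_range_eq_sup_closure [IsFreeGroup F] {n : ℕ} {H : Subgroup F}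
    (hH : ∃ f : FreeGroup (Fin n) →* F, f.range = H) (t : Finset F) (ht : ↑t ⊆ depSet H) :
    ∃ f : FreeGroup (Fin n) →* F, f.range = H ⊔ Subgroup.closure (t : Set F) := by
  classical
  induction t using Finset.induction_on with
  | empty => simpa using hH
  | insert g t _ ih =>
    rw [Finset.coe_insert, Set.insert_subset_iff] at ht
    have hg : Depends (H ⊔ Subgroup.closure (t : Set F)) g := ht.1.mono le_sup_left
    have := hg.exists_range_eq_sup (ih ht.2)
    rwa [sup_assoc, ← Subgroup.closure_union, Set.union_singleton, ← Finset.coe_insert] at this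

theorem le_DepSubgroup (H : Subgroup F) : H ≤ DepSubgroup H := by
  intro h hh
  refine Subgroup.subset_closure fun hinj => ?_
  have heq : Monoid.Coprod.inl (⟨h, hh⟩ : H) =
      (Monoid.Coprod.inr (FreeGroup.of ()) : ↥H ∗ FreeGroup Unit) := hinj (by simp [phi])
  have := congrArg Monoid.Coprod.snd heq
  simp only [Monoid.Coprod.snd_apply_inl, Monoid.Coprod.snd_apply_inr] at this
  exact FreeGroup.of_ne_one _ this.symm

end Dependence

theorem Subgroup.exists_finset_of_mem_closure {G : Type*} [Group G] {S : Set G} {x : G}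
    (hx : x ∈ closure S) : ∃ t : Finset G, ↑t ⊆ S ∧ x ∈ closure (t : Set G) := by
  classical
  induction hx using closure_induction with
  | mem x hx => exact ⟨{x}, by simpa using hx, subset_closure (by simp)⟩
  | one => exact ⟨∅, by simp, one_mem _⟩
  | mul x y _ _ hx hy =>
    obtain ⟨s, hs, hxs⟩ := hx
    obtain ⟨t, ht, hyt⟩ := hy
    refine ⟨s ∪ t, by simp [hs, ht], mul_mem ?_ ?_⟩
    · exact closure_mono (by simp) hxs
    · exact closure_mono (by simp) hyt
  | inv x _ hx =>
    obtain ⟨s, hs, hxs⟩ := hx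
    exact ⟨s, hs, inv_mem hxs⟩

theorem exists_rk_eq_natCast [Group F] {H : Subgroup F} (hH : H.FG) :
    ∃ n : ℕ, rk H = n ∧ ∃ f : FreeGroup (Fin n) →* F, f.range = H := by
  obtain ⟨t, ht⟩ := hH
  have : Nonempty {S : Set F // Subgroup.closure S = H} := ⟨⟨t, ht⟩⟩
  obtain ⟨⟨S, hS⟩, hmin⟩ :=
    ciInf_mem fun S : {S : Set F // Subgroup.closure S = H} => Cardinal.mk S.1
  have hle : Cardinal.mk S ≤ Cardinal.mk (t : Set F) :=
    hmin.trans_le (ciInf_le' (fun S : {S : Set F // Subgroup.closure S = H} => Cardinal.mk S.1)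
      ⟨t, ht⟩)
  have : Finite S := Cardinal.lt_aleph0_iff_finite.1 (hle.trans_lt (Cardinal.mk_lt_aleph0))
  refine ⟨Nat.card S, ?_, FreeGroup.lift fun i => ((Finite.equivFin S).symm i : F), ?_⟩
  · rw [rk, ← hmin, Nat.cast_card]
  · rw [FreeGroup.range_lift_eq_closure, ← hS]
    congr 1
    exact ((Finite.equivFin S).symm.surjective.range_comp Subtype.val).trans Subtype.range_coe

theorem rk_range_le [Group F] {n : ℕ} (f : FreeGroup (Fin n) →* F) : rk f.range ≤ n := by
  have hS : Subgroup.closure (Set.range fun i => f (FreeGroup.of i)) = f.range := by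
    rw [← FreeGroup.range_lift_eq_closure]
    congr 1
    ext i; simp
  refine (ciInf_le' (fun S : {S : Set F // Subgroup.closure S = f.range} => Cardinal.mk S.1)
    ⟨_, hS⟩).trans ?_
  simpa using Cardinal.mk_range_le_lift (f := fun i : Fin n => f (FreeGroup.of i))

/-- for finitely generated `H`, `rank (Dep H) ≤ rank H`. -/
theorem rank_DepSubgroup_le [Group F] [IsFreeGroup F] (H : Subgroup F) (hH : H.FG) :
    rk (DepSubgroup H) ≤ rk H := by
  classical
  obtain ⟨n, hn, hf⟩ := exists_rk_eq_natCast hH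
  rw [hn]
  rcases IsFreeGroup.exists_surjective_or (DepSubgroup H) n with ⟨s, hs⟩ | ⟨s, hs⟩
  · have hr : ((DepSubgroup H).subtype.comp s).range = DepSubgroup H := by
      rw [MonoidHom.range_comp, MonoidHom.range_eq_top.2 hs, ← MonoidHom.range_eq_map,
        Subgroup.range_subtype]
    rw [← hr]
    exact rk_range_le _
  · exfalso
    choose d hd using fun i => hs (FreeGroup.of i)
    choose t ht hdt using fun i => Subgroup.exists_finset_of_mem_closure (d i).2
    let T := Finset.univ.biUnion t
    have hT : (T : Set F) ⊆ depSet H := by simpa [T] using ht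
    obtain ⟨f, hfT⟩ := exists_range_eq_sup_closure hf T hT
    have hfD : ∀ x, f x ∈ DepSubgroup H := fun x =>
      (hfT.le.trans (sup_le (le_DepSubgroup H) (Subgroup.closure_mono hT))) ⟨x, rfl⟩
    have hmem : ∀ i, ∃ x, f x = d i := fun i => by
      rw [← MonoidHom.mem_range, hfT]
      refine Subgroup.mem_sup_right (Subgroup.closure_mono ?_ (hdt i))
      exact_mod_cast Finset.subset_biUnion_of_mem t (Finset.mem_univ i)
    choose x hx using hmem
    refine FreeGroup.not_surjective_fin_succ n (s.comp (f.codRestrict _ hfD)) ?_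
    rw [← MonoidHom.range_eq_top, ← top_le_iff, ← FreeGroup.closure_range_of,
      Subgroup.closure_le]
    rintro _ ⟨i, rfl⟩
    refine ⟨x i, ?_⟩
    rw [← hd i, MonoidHom.comp_apply]
    exact congrArg s (Subtype.ext (hx i))
end

section
/- Let H be a finitely generated subgroup of a free group F. Then there exists a finite subset S ⊆ F such that dep(H), the set of all elements of F that depend on H, equals the finite union of double cosets ∪_{s ∈ S} H s H. Consequently Dep(H) is generated by H together with the finite set S, and in particular Dep(H) is finitely generated. -/
open scoped Monoid.Coprod

variable {F : Type*}

/-- `w` can be reached from `1` by a path in the Cayley graph of `F` with respect to `X` all of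
whose vertices, except possibly the first one, lie in `B`. -/
inductive ReachableIn [Group F] (X B : Set F) : F → Prop
  | one : ReachableIn X B 1
  | mul {w s : F} : ReachableIn X B w → s ∈ X → w * s ∈ B → ReachableIn X B (w * s)
  | mul_inv {w s : F} : ReachableIn X B w → s ∈ X → w * s⁻¹ ∈ B → ReachableIn X B (w * s⁻¹)

namespace ReachableIn

variable [Group F] {X B C : Set F}

theorem mono (hBC : B ⊆ C) {w : F} (h : ReachableIn X B w) : ReachableIn X C w := by
  induction h with
  | one => exact one
  | mul _ hs hm ih => exact ih.mul hs (hBC hm)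
  | mul_inv _ hs hm ih => exact ih.mul_inv hs (hBC hm)

theorem mul_left {a w : F} (ha : ReachableIn X C a) (hBC : ∀ c ∈ B, a * c ∈ C)
    (h : ReachableIn X B w) : ReachableIn X C (a * w) := by
  induction h with
  | one => simpa using ha
  | mul _ hs hm ih =>
    rw [← mul_assoc]
    exact ih.mul hs (by rw [mul_assoc]; exact hBC _ hm)
  | mul_inv _ hs hm ih =>
    rw [← mul_assoc]
    exact ih.mul_inv hs (by rw [mul_assoc]; exact hBC _ hm)

theorem mem (h1 : (1 : F) ∈ B) {w : F} (h : ReachableIn X B w) : w ∈ B := by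
  cases h with
  | one => exact h1
  | mul _ _ hm => exact hm
  | mul_inv _ _ hm => exact hm

end ReachableIn

theorem exists_finite_reachableIn_mem [Group F] {X : Set F} (hX : Subgroup.closure X = ⊤) (t : F) :
    ∃ E : Set F, E.Finite ∧ 1 ∈ E ∧ t ∈ E ∧ ∀ e ∈ E, ReachableIn X E e := by
  have ht : t ∈ Subgroup.closure X := hX ▸ Subgroup.mem_top t
  induction ht using Subgroup.closure_induction_right with
  | one => exact ⟨{1}, by simp, by simp, by simp, by rintro _ rfl; exact .one⟩
  | mul_right w _ s hs ih =>
    obtain ⟨E, hE, h1, hw, hr⟩ := ih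
    refine ⟨insert (w * s) E, hE.insert _, by simp [h1], by simp, ?_⟩
    have key : ∀ e ∈ E, ReachableIn X (insert (w * s) E) e :=
      fun e he => (hr e he).mono (Set.subset_insert _ _)
    rintro e (rfl | he)
    · exact (key w hw).mul hs (by simp)
    · exact key e he
  | mul_inv_cancel w _ s hs ih =>
    obtain ⟨E, hE, h1, hw, hr⟩ := ih
    refine ⟨insert (w * s⁻¹) E, hE.insert _, by simp [h1], by simp, ?_⟩
    have key : ∀ e ∈ E, ReachableIn X (insert (w * s⁻¹) E) e :=
      fun e he => (hr e he).mono (Set.subset_insert _ _)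
    rintro e (rfl | he)
    · exact (key w hw).mul_inv hs (by simp)
    · exact key e he

theorem exists_finite_reachableIn_superset [Group F] {X : Set F} (hX : Subgroup.closure X = ⊤)
    {T : Set F} (hT : T.Finite) :
    ∃ E : Set F, E.Finite ∧ 1 ∈ E ∧ T ⊆ E ∧ ∀ e ∈ E, ReachableIn X E e := by
  induction T, hT using Set.Finite.induction_on with
  | empty => exact ⟨{1}, by simp, by simp, by simp, by rintro _ rfl; exact .one⟩
  | insert _ _ ih =>
    obtain ⟨E, hE, h1, hw, hr⟩ := ih
    obtain ⟨E', hE', _, hw', hr'⟩ := exists_finite_reachableIn_mem hX ‹F›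
    refine ⟨E ∪ E', hE.union hE', Or.inl h1, ?_, ?_⟩
    · exact Set.insert_subset (Or.inr hw') (hw.trans Set.subset_union_left)
    · rintro e (he | he)
      · exact (hr e he).mono Set.subset_union_left
      · exact (hr' e he).mono Set.subset_union_right

/-- A set that represents an `H`-invariant subtree of the Cayley graph containing `1`. -/
structure IsInvariantTree [Group F] (X : Set F) (H : Subgroup F) (B : Set F) : Prop where
  one_mem : 1 ∈ B
  mul_mem : ∀ h ∈ H, ∀ b ∈ B, h * b ∈ B
  reachable : ∀ b ∈ B, ReachableIn X B b

open Pointwise in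
/-- A finitely generated subgroup has an invariant subtree with finite quotient. -/
theorem exists_finite_isInvariantTree [Group F] {X : Set F} (hX : Subgroup.closure X = ⊤)
    {H : Subgroup F} (hH : H.FG) :
    ∃ E : Set F, E.Finite ∧ IsInvariantTree X H ((H : Set F) * E) := by
  obtain ⟨T, rfl⟩ := hH
  obtain ⟨E, hE, h1, hT, hr⟩ := exists_finite_reachableIn_superset hX
    ((T.finite_toSet).union (T.finite_toSet.inv))
  set H := Subgroup.closure (T : Set F) with hH
  have hHE : ∀ h ∈ H, ∀ c ∈ E, h * c ∈ (H : Set F) * E :=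
    fun h hh c hc => Set.mul_mem_mul hh hc
  have hreach : ∀ h ∈ H, ReachableIn X ((H : Set F) * E) h := by
    intro h hh
    induction hh using Subgroup.closure_induction_right with
    | one => exact .one
    | mul_right w hw s hs ih => exact ih.mul_left (hHE w hw) (hr s (hT (Or.inl hs)))
    | mul_inv_cancel w hw s hs ih =>
      exact ih.mul_left (hHE w hw) (hr s⁻¹ (hT (Or.inr (by simpa using hs))))
  refine ⟨E, hE, ⟨1, H.one_mem, 1, h1, by simp⟩, ?_, ?_⟩
  · rintro h hh _ ⟨k, hk, e, he, rfl⟩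
    exact ⟨h * k, H.mul_mem hh hk, e, he, mul_assoc _ _ _⟩
  · rintro _ ⟨k, hk, e, he, rfl⟩
    exact (hreach k hk).mul_left (hHE k hk) (hr e he)

theorem IsInvariantTree.exists_boundary [Group F] {X : Set F} (hX : Subgroup.closure X = ⊤)
    {H : Subgroup F} {B : Set F} (hB : IsInvariantTree X H B) {g : F} (hg : g ∉ B) :
    ∃ u ∈ B, ∃ s, (s ∈ X ∨ s⁻¹ ∈ X) ∧ u * s ∉ B := by
  by_contra! hcon
  apply hg
  have : g ∈ Subgroup.closure X := hX ▸ Subgroup.mem_top g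
  induction this using Subgroup.closure_induction_right with
  | one => exact hB.one_mem
  | mul_right w _ s hs ih =>
    by_cases hw : w ∈ B
    · exact hcon w hw s (Or.inl hs)
    · exact absurd (ih hw) hw
  | mul_inv_cancel w _ s hs ih =>
    by_cases hw : w ∈ B
    · exact hcon w hw s⁻¹ (Or.inr (by simpa using hs))
    · exact absurd (ih hw) hw

theorem IsInvariantTree.adjoin [Group F] {X : Set F} {H : Subgroup F} {B : Set F}
    (hB : IsInvariantTree X H B) {u s : F} (hu : u ∈ B) (hs : s ∈ X ∨ s⁻¹ ∈ X) :
    IsInvariantTree X H (B ∪ {x | ∃ h ∈ H, x = h * u * s}) where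
  one_mem := Or.inl hB.one_mem
  mul_mem := by
    rintro h hh b (hb | ⟨k, hk, rfl⟩)
    · exact Or.inl (hB.mul_mem h hh b hb)
    · exact Or.inr ⟨h * k, H.mul_mem hh hk, by group⟩
  reachable := by
    rintro b (hb | ⟨k, hk, rfl⟩)
    · exact (hB.reachable b hb).mono Set.subset_union_left
    · have := (hB.reachable _ (hB.mul_mem k hk u hu)).mono
        (C := B ∪ {x | ∃ h ∈ H, x = h * u * s}) Set.subset_union_left
      rcases hs with hs | hs
      · exact this.mul hs (Or.inr ⟨k, hk, rfl⟩)
      · simpa using this.mul_inv hs (Or.inr ⟨k, hk, by simp⟩)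

theorem exists_maximal_isInvariantTree [Group F] {X : Set F} {H : Subgroup F} {A : Set F}
    (hA : IsInvariantTree X H A) {g : F} (hg : ∀ a ∈ A, g * a ∉ A) :
    ∃ B, Maximal (fun B => IsInvariantTree X H B ∧ ∀ a ∈ B, g * a ∉ B) B := by
  suffices hchains : ∀ c ⊆ {B : Set F | IsInvariantTree X H B ∧ ∀ a ∈ B, g * a ∉ B},
      IsChain (· ⊆ ·) c → c.Nonempty →
        ∃ ub ∈ {B : Set F | IsInvariantTree X H B ∧ ∀ a ∈ B, g * a ∉ B}, ∀ s ∈ c, s ⊆ ub by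
    obtain ⟨B, -, hB⟩ := zorn_subset_nonempty _ hchains A ⟨hA, hg⟩
    exact ⟨B, hB⟩
  intro c hc hchain ⟨C, hC⟩
  refine ⟨⋃₀ c, ⟨⟨⟨C, hC, (hc hC).1.one_mem⟩, ?_, ?_⟩, ?_⟩,
    fun s hs => Set.subset_sUnion_of_mem hs⟩
  · rintro h hh b ⟨D, hD, hb⟩
    exact ⟨D, hD, (hc hD).1.mul_mem h hh b hb⟩
  · rintro b ⟨D, hD, hb⟩
    exact ((hc hD).1.reachable b hb).mono (Set.subset_sUnion_of_mem hD)
  · rintro a ⟨D, hD, ha⟩ ⟨D', hD', ha'⟩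
    rcases hchain.total hD hD' with h | h
    · exact (hc hD').2 a (h ha) ha'
    · exact (hc hD).2 a ha (h ha')

/-- If an invariant subtree `A` is disjoint from `g • A`, it can be enlarged so that the two
subtrees are still disjoint but joined by an edge. -/
theorem exists_isInvariantTree_adjacent [Group F] {X : Set F} (hX : Subgroup.closure X = ⊤)
    {H : Subgroup F} {A : Set F} (hA : IsInvariantTree X H A) {g : F}
    (hg : ∀ a ∈ A, g * a ∉ A) :
    ∃ B, IsInvariantTree X H B ∧ (∀ a ∈ B, g * a ∉ B) ∧
      ∃ u ∈ B, ∃ v ∈ B, ∃ s, (s ∈ X ∨ s⁻¹ ∈ X) ∧ u * s = g * v := by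
  obtain ⟨B, ⟨hB, hgB⟩, hmax⟩ := exists_maximal_isInvariantTree hA hg
  refine ⟨B, hB, hgB, ?_⟩
  obtain ⟨u, hu, s, hs, hus⟩ := hB.exists_boundary hX (by simpa using hgB 1 hB.one_mem)
  by_contra! hcon
  have hs' : s⁻¹ ∈ X ∨ s⁻¹⁻¹ ∈ X := by rw [inv_inv]; exact hs.symm
  refine hus (hmax ⟨hB.adjoin hu hs, ?_⟩ Set.subset_union_left (Or.inr ⟨1, H.one_mem, by simp⟩))
  rintro a (ha | ⟨h, hh, rfl⟩) (ha' | ⟨k, hk, hk'⟩)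
  · exact hgB a ha ha'
  · exact hcon _ (hB.mul_mem k hk u hu) a ha s hs hk'.symm
  · exact hcon _ ha' _ (hB.mul_mem h hh u hu) s⁻¹ hs' (by group)
  · refine hgB _ (hB.mul_mem h hh u hu) ?_
    have : g * (h * u) = k * u := by
      simpa [mul_assoc] using congrArg (· * s⁻¹) hk'
    rw [this]
    exact hB.mul_mem k hk u hu

/-- The balanced product `K ×_H F` for a homomorphism `i : H →* K`, as a setoid on `K × F`. -/
def balancedSetoid [Group F] (H : Subgroup F) {K : Type*} [Group K] (i : H →* K) :
    Setoid (K × F) where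
  r p q := ∃ h : H, p.1 = q.1 * i h ∧ q.2 = h * p.2
  iseqv :=
    { refl := fun p => ⟨1, by simp⟩
      symm := by
        rintro ⟨k, f⟩ ⟨k', f'⟩ ⟨h, hh, hh'⟩
        exact ⟨h⁻¹, by simp_all⟩
      trans := by
        rintro ⟨k, f⟩ ⟨k', f'⟩ ⟨k'', f''⟩ ⟨h, hh, hh'⟩ ⟨l, hl, hl'⟩
        exact ⟨l * h, by simp_all [mul_assoc]⟩ }

/-- The balanced product `K ×_H F` for a homomorphism `i : H →* K`. -/
abbrev BalancedProduct [Group F] (H : Subgroup F) {K : Type*} [Group K] (i : H →* K) : Type _ :=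
  Quotient (balancedSetoid H i)

namespace BalancedProduct

variable [Group F] {H : Subgroup F} {K : Type*} [Group K] {i : H →* K}

variable (i) in
/-- The class of `(k, f)` in the balanced product. -/
def mk (k : K) (f : F) : BalancedProduct H i := Quotient.mk _ (k, f)

theorem mk_eq_mk {k k' : K} {f f' : F} :
    mk i k f = mk i k' f' ↔ ∃ h : H, k = k' * i h ∧ f' = h * f :=
  Quotient.eq (r := balancedSetoid H i)

theorem mk_mul (k : K) (h : H) (f : F) : mk i (k * i h) f = mk i k (h * f) :=
  mk_eq_mk.2 ⟨h, rfl, rfl⟩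

theorem ind {p : BalancedProduct H i → Prop} (h : ∀ k f, p (mk i k f)) (y : BalancedProduct H i) :
    p y :=
  Quotient.ind (fun q => h q.1 q.2) y

instance : MulAction K (BalancedProduct H i) where
  smul k := Quotient.map (fun p => (k * p.1, p.2)) (by
    rintro p q ⟨h, hh, hh'⟩
    exact ⟨h, by simp [hh, mul_assoc], hh'⟩)
  one_smul := ind fun k f => congrArg (Quotient.mk _) (by simp)
  mul_smul a b := ind fun k f => congrArg (Quotient.mk _) (by simp [mul_assoc])

theorem smul_mk (a k : K) (f : F) : a • mk i k f = mk i (a * k) f := rfl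

variable (i) in
/-- Right multiplication by an element of `F`. -/
def rightMul (s : F) : Equiv.Perm (BalancedProduct H i) where
  toFun := Quotient.map (fun p => (p.1, p.2 * s)) (by
    rintro p q ⟨h, hh, hh'⟩
    exact ⟨h, hh, by simp [hh', mul_assoc]⟩)
  invFun := Quotient.map (fun p => (p.1, p.2 * s⁻¹)) (by
    rintro p q ⟨h, hh, hh'⟩
    exact ⟨h, hh, by simp [hh', mul_assoc]⟩)
  left_inv := ind fun k f => congrArg (Quotient.mk _) (by simp)
  right_inv := ind fun k f => congrArg (Quotient.mk _) (by simp)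

theorem rightMul_mk (s : F) (k : K) (f : F) : rightMul i s (mk i k f) = mk i k (f * s) := rfl

variable (i) in
open scoped Classical in
/-- The map exchanging the `K`-orbits of `(1, m)` and `(1, v)` by `(1, m) ↦ (x, v)`. -/
noncomputable def swapFun (m v : F) (x : K) (y : BalancedProduct H i) : BalancedProduct H i :=
  Quotient.liftOn y (fun p =>
      if hm : p.2 * m⁻¹ ∈ H then mk i (p.1 * i ⟨_, hm⟩ * x) v
      else if hv : p.2 * v⁻¹ ∈ H then mk i (p.1 * i ⟨_, hv⟩ * x⁻¹) m
      else mk i p.1 p.2) (by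
    rintro ⟨k', f⟩ ⟨k, f'⟩ ⟨h, hh, hh'⟩
    dsimp only at hh hh' ⊢
    subst hh hh'
    have key (n : F) : (h : F) * f * n⁻¹ ∈ H ↔ f * n⁻¹ ∈ H := by
      rw [mul_assoc, H.mul_mem_cancel_left h.2]
    have key' (n : F) (hn : f * n⁻¹ ∈ H) (hn' : (h : F) * f * n⁻¹ ∈ H) :
        i ⟨_, hn'⟩ = i h * i ⟨_, hn⟩ := by
      rw [← map_mul]
      congr 1
      ext
      simp [mul_assoc]
    by_cases hm : f * m⁻¹ ∈ H
    · rw [dif_pos hm, dif_pos ((key m).2 hm), key' m hm, ← mul_assoc k]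
    · by_cases hv : f * v⁻¹ ∈ H
      · rw [dif_neg hm, dif_neg (mt (key m).1 hm), dif_pos hv, dif_pos ((key v).2 hv), key' v hv,
          ← mul_assoc k]
      · simp [key, hm, hv, mk_mul])

theorem swapFun_mk_of_ne {m v f : F} (x k : K) (hm : f * m⁻¹ ∉ H) (hv : f * v⁻¹ ∉ H) :
    swapFun i m v x (mk i k f) = mk i k f := by
  simp [swapFun, mk, hm, hv]

theorem swapFun_mk_left (m v : F) (x k : K) :
    swapFun i m v x (mk i k m) = mk i (k * x) v := by
  have h1 : (⟨m * m⁻¹, by simp⟩ : H) = 1 := by ext; simp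
  have hm : m * m⁻¹ ∈ H := by simp
  classical
  change dite (m * m⁻¹ ∈ H) (fun hm => mk i (k * i ⟨_, hm⟩ * x) v) _ = _
  rw [dif_pos hm, h1, map_one, mul_one]

theorem swapFun_mk_right {m v : F} (hmv : v * m⁻¹ ∉ H) (x k : K) :
    swapFun i m v x (mk i k v) = mk i (k * x⁻¹) m := by
  have h1 : (⟨v * v⁻¹, by simp⟩ : H) = 1 := by ext; simp
  have hv : v * v⁻¹ ∈ H := by simp
  classical
  change dite (v * m⁻¹ ∈ H) _ (fun _ => dite (v * v⁻¹ ∈ H)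
    (fun hv => mk i (k * i ⟨_, hv⟩ * x⁻¹) m) _) = _
  rw [dif_neg hmv, dif_pos hv, h1, map_one, mul_one]

theorem mk_eq_of_mul_inv_mem {f m : F} (h : f * m⁻¹ ∈ H) (k : K) :
    mk i k f = mk i (k * i ⟨_, h⟩) m := by
  rw [mk_mul]
  simp

theorem swapFun_smul {m v : F} (hmv : v * m⁻¹ ∉ H) (x a : K) (y : BalancedProduct H i) :
    swapFun i m v x (a • y) = a • swapFun i m v x y := by
  induction y using ind with
  | h k f =>
    by_cases hm : f * m⁻¹ ∈ H
    · rw [mk_eq_of_mul_inv_mem hm]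
      simp only [smul_mk, swapFun_mk_left, mul_assoc]
    · by_cases hv : f * v⁻¹ ∈ H
      · rw [mk_eq_of_mul_inv_mem hv]
        simp only [smul_mk, swapFun_mk_right hmv, mul_assoc]
      · simp only [smul_mk, swapFun_mk_of_ne x _ hm hv]

theorem swapFun_swapFun {m v : F} (hmv : v * m⁻¹ ∉ H) (x : K) (y : BalancedProduct H i) :
    swapFun i m v x (swapFun i m v x y) = y := by
  induction y using ind with
  | h k f =>
    by_cases hm : f * m⁻¹ ∈ H
    · rw [mk_eq_of_mul_inv_mem hm, swapFun_mk_left, swapFun_mk_right hmv,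
        mul_inv_cancel_right]
    · by_cases hv : f * v⁻¹ ∈ H
      · rw [mk_eq_of_mul_inv_mem hv, swapFun_mk_right hmv, swapFun_mk_left,
          inv_mul_cancel_right]
      · rw [swapFun_mk_of_ne x k hm hv, swapFun_mk_of_ne x k hm hv]

end BalancedProduct

theorem FreeGroupBasis.closure_range [Group F] {I : Type*} (b : FreeGroupBasis I F) :
    Subgroup.closure (Set.range b) = ⊤ := by
  have : Set.range b = b.repr.symm.toMonoidHom '' Set.range FreeGroup.of := by
    rw [← Set.range_comp]
    rfl
  rw [this, ← MonoidHom.map_closure, FreeGroup.closure_range_of, ← MonoidHom.range_eq_map]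
  exact MonoidHom.range_eq_top.2 b.repr.symm.surjective

open BalancedProduct in
/-- Joining two points `u`, `v` of an invariant subtree `B` by a new edge labelled by a generator
yields an action of `F` on the balanced product in which `u * b j * v⁻¹` acts at the base point
like a prescribed element `x`. -/
theorem IsInvariantTree.exists_perm_hom [Group F] {I : Type*} (b : FreeGroupBasis I F)
    {H : Subgroup F} {B : Set F} (hB : IsInvariantTree (Set.range b) H B) {j : I} {u v : F}
    (hu : u ∈ B) (hv : v ∈ B) (hu' : u * b j ∉ B) (hv' : v * (b j)⁻¹ ∉ B)
    {K : Type*} [Group K] (i : H →* K) (x : K) :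
    ∃ ρ : F →* Equiv.Perm (BalancedProduct H i),
      (∀ f (a : K) y, ρ f (a • y) = a • ρ f y) ∧
      (∀ w ∈ B, ρ w (BalancedProduct.mk i 1 w) = BalancedProduct.mk i 1 1) ∧
      ρ (u * b j * v⁻¹) (BalancedProduct.mk i x 1) = BalancedProduct.mk i 1 1 := by
  classical
  have hvu : v * (u * b j)⁻¹ ∉ H := fun h => hu' (by
    simpa using hB.mul_mem _ (H.inv_mem h) v hv)
  let τ : Equiv.Perm (BalancedProduct H i) :=
    Function.Involutive.toPerm (swapFun i (u * b j) v x) (swapFun_swapFun hvu x)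
  let σ : I → Equiv.Perm (BalancedProduct H i) :=
    fun k => if k = j then τ * rightMul i (b j) else rightMul i (b k)
  have hσj (y) : σ j y = swapFun i (u * b j) v x (rightMul i (b j) y) := by
    simp only [σ, if_true, Equiv.Perm.mul_apply]
    rfl
  have hσ_smul (k : I) (a : K) (y) : σ k (a • y) = a • σ k y := by
    have hr (s : F) : rightMul i s (a • y) = a • rightMul i s y := by
      induction y using ind with
      | h k f => rfl
    by_cases hk : k = j
    · subst hk
      rw [hσj, hσj, hr, swapFun_smul hvu]
    · simp [σ, hk, hr]
  have hσ_mk (k : I) (w : F) (hw : w ∈ B) (hw' : w * b k ∈ B) :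
      σ k (BalancedProduct.mk i 1 w) = BalancedProduct.mk i 1 (w * b k) := by
    by_cases hk : k = j
    · subst hk
      rw [hσj, rightMul_mk, swapFun_mk_of_ne]
      · exact fun h => hu' (by simpa [mul_assoc] using hB.mul_mem _ (H.inv_mem h) _ hw')
      · exact fun h => hv' (by simpa [mul_assoc] using hB.mul_mem _ (H.inv_mem h) _ hw)
    · simp [σ, hk, rightMul_mk]
  let ρ : F →* Equiv.Perm (BalancedProduct H i) := b.lift fun k => (σ k)⁻¹
  have hρ (k : I) : ρ (b k) = (σ k)⁻¹ := by simp [ρ]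
  have hρ_smul (f : F) (a : K) (y) : ρ f (a • y) = a • ρ f y := by
    have hf : f ∈ Subgroup.closure (Set.range b) := b.closure_range ▸ Subgroup.mem_top f
    induction hf using Subgroup.closure_induction_right generalizing y with
    | one => simp
    | mul_right f _ s hs ih =>
      obtain ⟨k, rfl⟩ := hs
      rw [map_mul, Equiv.Perm.mul_apply, Equiv.Perm.mul_apply, ← ih, hρ]
      congr 1
      rw [Equiv.Perm.inv_eq_iff_eq, hσ_smul, ← Equiv.Perm.mul_apply, mul_inv_cancel,
        Equiv.Perm.one_apply]
    | mul_inv_cancel f _ s hs ih =>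
      obtain ⟨k, rfl⟩ := hs
      rw [map_mul, Equiv.Perm.mul_apply, Equiv.Perm.mul_apply, ← ih, map_inv, hρ, inv_inv, hσ_smul]
  have hρ_mk : ∀ w ∈ B, ρ w (BalancedProduct.mk i 1 w) = BalancedProduct.mk i 1 1 := by
    intro w hw
    induction hB.reachable w hw with
    | one => simp
    | @mul w s h hs hm ih =>
      obtain ⟨k, rfl⟩ := hs
      have hwB := h.mem hB.one_mem
      rw [← ih hwB, map_mul, Equiv.Perm.mul_apply, hρ, ← hσ_mk k w hwB hm,
        ← Equiv.Perm.mul_apply (σ k)⁻¹, inv_mul_cancel, Equiv.Perm.one_apply]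
    | @mul_inv w s h hs hm ih =>
      obtain ⟨k, rfl⟩ := hs
      have hwB := h.mem hB.one_mem
      rw [← ih hwB, map_mul, Equiv.Perm.mul_apply, map_inv, hρ, inv_inv,
        hσ_mk k _ hm (by simpa using hwB), inv_mul_cancel_right]
  refine ⟨ρ, hρ_smul, hρ_mk, ?_⟩
  have h1 : ρ v⁻¹ (BalancedProduct.mk i x 1) = BalancedProduct.mk i x v := by
    rw [map_inv, Equiv.Perm.inv_eq_iff_eq]
    simpa [smul_mk] using (congrArg (x • ·) (hρ_mk v hv)).symm.trans (hρ_smul v x _).symm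
  have h2 : ρ (b j) (BalancedProduct.mk i x v) = BalancedProduct.mk i 1 u := by
    rw [hρ, Equiv.Perm.inv_eq_iff_eq, hσj, rightMul_mk, swapFun_mk_left, one_mul]
  rw [map_mul, map_mul, Equiv.Perm.mul_apply, Equiv.Perm.mul_apply, h1, h2, hρ_mk u hu]

open BalancedProduct in
theorem phi_injective_of_perm_hom [Group F] (H : Subgroup F) (g : F)
    (ρ : F →* Equiv.Perm (BalancedProduct H (Monoid.Coprod.inl : H →* H ∗ FreeGroup Unit)))
    (hρ : ∀ f (a : H ∗ FreeGroup Unit) y, ρ f (a • y) = a • ρ f y)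
    (hH : ∀ h ∈ H, ρ h (BalancedProduct.mk _ 1 h) = BalancedProduct.mk _ 1 1)
    (hg : ρ g (BalancedProduct.mk _ (Monoid.Coprod.inr (FreeGroup.of ())) 1) =
      BalancedProduct.mk _ 1 1) :
    Function.Injective (phi H g) := by
  let S : Subgroup (H ∗ FreeGroup Unit) :=
    { carrier := {k | ρ (phi H g k) (k • BalancedProduct.mk _ 1 1) = BalancedProduct.mk _ 1 1}
      one_mem' := by simp
      mul_mem' := by
        intro k l hk hl
        simp only [Set.mem_ofPred_eq] at *
        rw [map_mul, map_mul, Equiv.Perm.mul_apply, mul_smul, hρ _ k, hl, hk]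
      inv_mem' := by
        intro k hk
        simp only [Set.mem_ofPred_eq] at *
        rw [map_inv, map_inv, Equiv.Perm.inv_eq_iff_eq, inv_smul_eq_iff, ← hρ, hk] }
  have hS (k) : k ∈ S := by
    induction k using Monoid.Coprod.induction_on with
    | inl h =>
      have := hH h h.2
      rwa [← mul_one (h : F), ← mk_mul, one_mul, ← mul_one (Monoid.Coprod.inl h), ← smul_mk,
        mul_one] at this
    | inr n =>
      induction n using FreeGroup.induction_on with
      | C1 => simp
      | of n => simpa [S, phi, smul_mk] using hg
      | inv_of n h => simpa using S.inv_mem h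
      | mul a c ha hc => simpa using S.mul_mem ha hc
    | mul k l hk hl => exact S.mul_mem hk hl
  refine (injective_iff_map_eq_one _).2 fun k hk => ?_
  have hk' : ρ (phi H g k) (k • BalancedProduct.mk _ 1 1) = BalancedProduct.mk _ 1 1 := hS k
  rw [hk, map_one, Equiv.Perm.one_apply, smul_mk, mk_eq_mk] at hk'
  obtain ⟨h, hh, h1⟩ := hk'
  have : h = 1 := by ext; simpa using h1.symm
  simpa [this] using hh

theorem phi_injective_of_disjoint [Group F] {I : Type*} (b : FreeGroupBasis I F)
    {H : Subgroup F} {A : Set F} (hA : IsInvariantTree (Set.range b) H A) {g : F}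
    (hg : ∀ a ∈ A, g * a ∉ A) : Function.Injective (phi H g) := by
  obtain ⟨B, hB, hgB, u, hu, v, hv, s, hs, hus⟩ :=
    exists_isInvariantTree_adjacent b.closure_range hA hg
  have hHB : ∀ h ∈ H, h ∈ B := fun h hh => by simpa using hB.mul_mem h hh 1 hB.one_mem
  rcases hs with ⟨j, rfl⟩ | ⟨j, hj⟩
  · obtain ⟨ρ, h1, h2, h3⟩ := hB.exists_perm_hom b (j := j) hu hv
      (by rw [hus]; exact hgB v hv)
      (fun h => hgB _ h (by rw [← mul_assoc, ← hus, mul_inv_cancel_right]; exact hu))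
      (Monoid.Coprod.inl : H →* H ∗ FreeGroup Unit) (Monoid.Coprod.inr (FreeGroup.of ()))
    refine phi_injective_of_perm_hom H g ρ h1 (fun h hh => h2 h (hHB h hh)) ?_
    rwa [hus, mul_inv_cancel_right] at h3
  · obtain rfl : s = (b j)⁻¹ := by rw [hj, inv_inv]
    have hvj : u = g * (v * b j) := by rw [← mul_assoc, ← hus, inv_mul_cancel_right]
    obtain ⟨ρ, h1, h2, h3⟩ := hB.exists_perm_hom b (j := j) hv hu
      (fun h => hgB _ h (hvj ▸ hu)) (by rw [hus]; exact hgB v hv)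
      (Monoid.Coprod.inl : H →* H ∗ FreeGroup Unit) (Monoid.Coprod.inr (FreeGroup.of ()))⁻¹
    refine phi_injective_of_perm_hom H g ρ h1 (fun h hh => h2 h (hHB h hh)) ?_
    have hgi : v * b j * u⁻¹ = g⁻¹ := by rw [hvj]; group
    rw [hgi, map_inv, Equiv.Perm.inv_eq_iff_eq] at h3
    have := congrArg ((Monoid.Coprod.inr (FreeGroup.of ()) : H ∗ FreeGroup Unit) • ·) h3
    simp only [← h1, BalancedProduct.smul_mk, mul_inv_cancel, mul_one] at this
    exact this.symm

theorem Depends.mul_mul [Group F] {H : Subgroup F} {g : F} (hg : Depends H g) {h k : F}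
    (hh : h ∈ H) (hk : k ∈ H) : Depends H (h * g * k) := by
  let θ (h k : H) : H ∗ FreeGroup Unit →* H ∗ FreeGroup Unit :=
    Monoid.Coprod.lift Monoid.Coprod.inl (FreeGroup.lift fun _ =>
      Monoid.Coprod.inl h * Monoid.Coprod.inr (FreeGroup.of ()) * Monoid.Coprod.inl k)
  intro hinj
  apply hg
  have hcomp : phi H g = (phi H (h * g * k)).comp (θ ⟨h, hh⟩⁻¹ ⟨k, hk⟩⁻¹) := by
    ext <;> simp [phi, θ, mul_assoc]
  have hinv : (θ ⟨h, hh⟩ ⟨k, hk⟩).comp (θ ⟨h, hh⟩⁻¹ ⟨k, hk⟩⁻¹) = MonoidHom.id _ := by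
    ext <;> simp [θ, mul_assoc]
  rw [hcomp, MonoidHom.coe_comp]
  exact hinj.comp (Function.LeftInverse.injective (DFunLike.congr_fun hinv))

theorem depends_of_mem [Group F] {H : Subgroup F} {h : F} (hh : h ∈ H) : Depends H h := by
  have h1 : Depends H 1 := by
    intro hinj
    have : (Monoid.Coprod.inr (FreeGroup.of ()) : H ∗ FreeGroup Unit) = 1 :=
      hinj (by simp [phi])
    exact FreeGroup.of_ne_one () (Monoid.Coprod.inr_injective (by simpa using this))
  simpa using h1.mul_mul hh H.one_mem

open Pointwise in
/-- for finitely generated `H`, `dep H` is a finite union of double cosets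
`H s H`, `s ∈ S`; consequently `Dep H` is generated by `H ∪ S`, and is finitely
generated. -/
theorem depSet_eq_finite_union_double_cosets [Group F] [IsFreeGroup F]
    (H : Subgroup F) (hH : H.FG) :
    ∃ S : Finset F,
      depSet H = ⋃ s ∈ (S : Set F), (H : Set F) * {s} * (H : Set F) ∧
      DepSubgroup H = Subgroup.closure ((H : Set F) ∪ (S : Set F)) ∧
      (DepSubgroup H).FG := by
  obtain ⟨E, hE, hA⟩ := exists_finite_isInvariantTree (IsFreeGroup.basis F).closure_range hH
  have hfin : {s ∈ E * E⁻¹ | Depends H s}.Finite := (hE.mul hE.inv).subset (Set.sep_subset _ _)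
  have hdep : depSet H = ⋃ s ∈ (hfin.toFinset : Set F), (H : Set F) * {s} * (H : Set F) := by
    ext g
    simp only [Set.Finite.coe_toFinset, Set.mem_iUnion, exists_prop]
    constructor
    · intro hg
      obtain ⟨a, ha, hga⟩ : ∃ a ∈ (H : Set F) * E, g * a ∈ (H : Set F) * E := by
        by_contra! hcon
        exact hg (phi_injective_of_disjoint _ hA hcon)
      obtain ⟨h, hh, e, he, rfl⟩ := ha
      obtain ⟨k, hk, d, hd, hkd⟩ := hga
      have hgeq : g = k * (d * e⁻¹) * h⁻¹ := by
        rw [eq_mul_inv_iff_mul_eq, ← mul_assoc, eq_mul_inv_iff_mul_eq, mul_assoc]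
        exact hkd.symm
      have hds : d * e⁻¹ = k⁻¹ * g * h := by rw [hgeq]; group
      refine ⟨d * e⁻¹, ⟨Set.mul_mem_mul hd (Set.inv_mem_inv.2 he), ?_⟩, ?_⟩
      · rw [hds]
        exact Depends.mul_mul hg (H.inv_mem hk) hh
      · rw [hgeq]
        exact Set.mul_mem_mul (Set.mul_mem_mul hk rfl) (H.inv_mem hh)
    · rintro ⟨s, ⟨-, hs⟩, _, ⟨h, hh, _, rfl, rfl⟩, k, hk, rfl⟩
      exact hs.mul_mul hh hk
  have hclosure : DepSubgroup H = Subgroup.closure ((H : Set F) ∪ (hfin.toFinset : Set F)) := by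
    apply le_antisymm
    · rw [DepSubgroup, Subgroup.closure_le, hdep]
      simp only [Set.iUnion_subset_iff]
      rintro s hs _ ⟨_, ⟨h, hh, _, rfl, rfl⟩, k, hk, rfl⟩
      exact mul_mem (mul_mem (Subgroup.subset_closure (Or.inl hh))
        (Subgroup.subset_closure (Or.inr hs))) (Subgroup.subset_closure (Or.inl hk))
    · refine Subgroup.closure_mono (Set.union_subset (fun h hh => depends_of_mem hh) ?_)
      intro s hs
      rw [Set.Finite.coe_toFinset] at hs
      exact hs.2
  refine ⟨hfin.toFinset, hdep, hclosure, ?_⟩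
  rw [hclosure, Subgroup.closure_union, Subgroup.closure_eq]
  exact hH.sup ⟨_, rfl⟩
end

section
/- Let the free group F be the free product F = F₁ ∗ F₂ (e.g., F is the free group on a disjoint union A₁ ⊔ A₂ of two sets, F₁ is the subgroup generated by A₁, and F₂ is the subgroup generated by A₂). Let H₁ ≤ F₁ and H₂ ≤ F₂ be finitely generated subgroups, and let H = ⟨H₁, H₂⟩ = H₁ ∗ H₂ ≤ F. Then dep(H) = H · (dep(H₁) ∪ dep(H₂)) · H, i.e., an element g ∈ F depends on H if and only if g = h₁ c h₂ for some h₁, h₂ ∈ H and some c that depends on H₁ or depends on H₂. -/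
open scoped Monoid.Coprod

variable {F : Type*}

/-- `F` is the internal free product of its subgroups `F₁` and `F₂`: the canonical
homomorphism `F₁ ∗ F₂ → F` induced by the inclusions is bijective. -/
def IsInternalFreeProduct [Group F] (F₁ F₂ : Subgroup F) : Prop :=
  Function.Bijective (Monoid.Coprod.lift F₁.subtype F₂.subtype)

namespace Monoid.CoprodI.Word

variable {ι : Type*} {M : ι → Type*} [∀ i, Group (M i)]

/-- A list of letters is reduced if it is the list of letters of a reduced word. -/
def IsReduced (L : List (Σ i, M i)) : Prop :=
  (∀ l ∈ L, l.2 ≠ 1) ∧ L.IsChain fun l l' => l.1 ≠ l'.1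

/-- The product in the free product of a list of letters. -/
def listProd (L : List (Σ i, M i)) : CoprodI M :=
  (L.map fun l => of l.2).prod

@[simp]
theorem listProd_nil : listProd ([] : List (Σ i, M i)) = 1 := rfl

@[simp]
theorem listProd_cons (l : Σ i, M i) (L : List (Σ i, M i)) :
    listProd (l :: L) = of l.2 * listProd L := by
  simp [listProd]

@[simp]
theorem listProd_append (L L' : List (Σ i, M i)) :
    listProd (L ++ L') = listProd L * listProd L' := by
  simp [listProd]

theorem IsReduced.infix {L L' : List (Σ i, M i)} (hL : IsReduced L) (h : L' <:+: L) :
    IsReduced L' :=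
  ⟨fun l hl => hL.1 l (h.subset hl), hL.2.infix h⟩

theorem isReduced_append {L L' : List (Σ i, M i)} :
    IsReduced (L ++ L') ↔ IsReduced L ∧ IsReduced L' ∧
      ∀ x ∈ L.getLast?, ∀ y ∈ L'.head?, x.1 ≠ y.1 := by
  simp only [IsReduced, List.isChain_append, List.mem_append, or_imp, forall_and]
  tauto

theorem isReduced_toList (w : Word M) : IsReduced w.toList := ⟨w.ne_one, w.chain_ne⟩

variable [DecidableEq ι] [∀ i, DecidableEq (M i)]

theorem prod_injective : Function.Injective (prod : Word M → CoprodI M) :=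
  Word.equiv.symm.injective

theorem toList_listProd_smul {L : List (Σ i, M i)} {w : Word M}
    (h : IsReduced (L ++ w.toList)) : (listProd L • w).toList = L ++ w.toList := by
  have : listProd L • w = ⟨L ++ w.toList, h.1, h.2⟩ := by
    apply prod_injective
    rw [prod_smul]
    simp [prod, listProd]
  rw [this]

theorem toList_of_smul {i : ι} {x : M i} {w : Word M} (hx : x ≠ 1) (h : w.fstIdx ≠ some i) :
    (of x • w).toList = ⟨i, x⟩ :: w.toList := by
  rw [← cons_eq_smul (h1 := h) (h2 := hx), cons_toList]

theorem head?_of_smul {i : ι} {x : M i} {w : Word M} (hx : x ≠ 1) (h : w.fstIdx ≠ some i) :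
    (of x • w).toList.head? = some ⟨i, x⟩ := by
  rw [toList_of_smul hx h, List.head?_cons]

omit [DecidableEq ι] [∀ i, DecidableEq (M i)] in
theorem fstIdx_eq_of_head? {w : Word M} {i : ι} {x : M i} (h : w.toList.head? = some ⟨i, x⟩) :
    w.fstIdx = some i := by
  simp [fstIdx, h]

theorem head?_of_smul_of_head? {i : ι} {x a : M i} {w : Word M}
    (h : w.toList.head? = some ⟨i, a⟩) (hxa : x * a ≠ 1) :
    (of x • w).toList.head? = some ⟨i, x * a⟩ := by
  induction w using consRecOn with
  | empty => simp at h
  | cons j m w h1 h2 _ =>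
    obtain ⟨rfl, h⟩ := by simpa using h
    obtain rfl := eq_of_heq h
    rw [cons_eq_smul, ← mul_smul, ← map_mul]
    exact head?_of_smul hxa h1

theorem fstIdx_of_smul {i : ι} {x : M i} {w : Word M} (hx : x ≠ 1)
    (h : w.toList.head? ≠ some ⟨i, x⁻¹⟩) : (of x • w).fstIdx = some i := by
  by_cases hi : w.fstIdx = some i
  · obtain ⟨⟨j, a⟩, ha, rfl⟩ := by simpa only [fstIdx, Option.map_eq_some_iff] using hi
    refine fstIdx_eq_of_head? (head?_of_smul_of_head? ha fun hxa => h ?_)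
    rw [ha, eq_inv_of_mul_eq_one_right hxa]
  · exact fstIdx_eq_of_head? (head?_of_smul hx hi)

theorem head?_listProd_smul {L : List (Σ i, M i)} {a b : Σ i, M i} {w : Word M}
    (hL : IsReduced (a :: L ++ [b])) (hw : w.toList.head? ≠ some ⟨b.1, b.2⁻¹⟩) :
    (listProd (a :: L ++ [b]) • w).toList.head? = some a := by
  rw [listProd_append, mul_smul, toList_listProd_smul, List.cons_append, List.head?_cons]
  obtain ⟨h₁, h₂, h₃⟩ := isReduced_append.1 hL
  refine isReduced_append.2 ⟨h₁, isReduced_toList _, fun x hx y hy => ?_⟩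
  have := fstIdx_of_smul (h₂.1 b (by simp)) hw
  rw [listProd_cons, listProd_nil, mul_one] at hy
  rw [fstIdx, Option.mem_def.1 hy, Option.map_some, Option.some_inj] at this
  exact this ▸ h₃ x hx b (by simp)

theorem head?_listProd_pow_smul_of_inner {L : List (Σ i, M i)} {a b : Σ i, M i} {n : ℕ} {w : Word M}
    (hinner : ∀ c ∈ L.head?, ∀ d ∈ L.getLast?, ∀ v : Word M, v.fstIdx ≠ some d.1 →
      (listProd L ^ n • v).fstIdx = some c.1)
    (hL : IsReduced (a :: L ++ [b])) (hn : n ≠ 0)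
    (hw : w.toList.head? ≠ some ⟨b.1, b.2⁻¹⟩) :
    (listProd (a :: L ++ [b]) ^ n • w).toList.head? = some a := by
  by_cases hab : a = ⟨b.1, b.2⁻¹⟩
  · obtain ⟨j, y⟩ := b
    subst hab
    obtain ⟨c, hc⟩ : ∃ c, L.head? = some c := by
      rcases L with _ | ⟨c, L⟩
      · simp [IsReduced] at hL
      · exact ⟨c, rfl⟩
    obtain ⟨d, hd⟩ : ∃ d, L.getLast? = some d := by
      rcases L.eq_nil_or_concat' with rfl | ⟨L, d, rfl⟩
      · simp at hc
      · exact ⟨d, by simp⟩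
    have hy : y ≠ 1 := hL.1 ⟨j, y⟩ (by simp)
    have hcj : c.1 ≠ j := by
      have := ((isReduced_append (L := [⟨j, y⁻¹⟩]) (L' := L ++ [⟨j, y⟩])).1 hL).2.2
      simpa [hc, eq_comm] using this
    have hdj : d.1 ≠ j := by
      have := (isReduced_append.1 hL).2.2
      simpa [List.getLast?_cons, hd] using this
    have hprod : listProd (⟨j, y⁻¹⟩ :: L ++ [⟨j, y⟩]) ^ n =
        of y⁻¹ * (listProd L ^ n * of y) := by
      have := conj_pow (i := n) (a := (of y)⁻¹) (b := listProd L)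
      simpa [mul_assoc] using this
    rw [hprod, mul_smul, mul_smul]
    refine head?_of_smul (inv_ne_one.2 hy) ?_
    have := hinner c hc d hd (of y • w)
    rw [fstIdx_of_smul hy hw] at this
    rw [this (by simpa using hdj.symm)]
    simpa using hcj
  · obtain ⟨n, rfl⟩ := Nat.exists_eq_succ_of_ne_zero hn
    clear hn hinner
    induction n with
    | zero => simpa using head?_listProd_smul hL hw
    | succ n ih =>
      rw [pow_succ', mul_smul]
      exact head?_listProd_smul hL (by rw [ih]; simpa using hab)

theorem fstIdx_listProd_pow_smul (hM : ∀ i, ∀ x : M i, x ≠ 1 → ∀ n ≠ 0, x ^ n ≠ 1)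
    {L : List (Σ i, M i)} (hL : IsReduced L) {n : ℕ} (hn : n ≠ 0) :
    ∀ a ∈ L.head?, ∀ b ∈ L.getLast?, ∀ w : Word M, w.fstIdx ≠ some b.1 →
    (listProd L ^ n • w).fstIdx = some a.1 := by
  induction L using List.bidirectionalRec with
  | nil => simp
  | singleton x =>
    rintro a ha b hb w hw
    obtain rfl : x = a := by simpa using ha
    obtain rfl : x = b := by simpa using hb
    simp only [listProd_cons, listProd_nil, mul_one, ← map_pow]
    exact fstIdx_eq_of_head? (head?_of_smul (hM _ _ (hL.1 x (by simp)) n hn) hw)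
  | cons_append x L y ih =>
    rintro a ha b hb w hw
    obtain rfl : x = a := by simpa using ha
    obtain rfl : y = b := by simpa [List.getLast?_cons] using hb
    exact fstIdx_eq_of_head? (head?_listProd_pow_smul_of_inner
      (ih (hL.infix ⟨[x], [y], rfl⟩)) hL hn fun h => hw (fstIdx_eq_of_head? h))

theorem head?_listProd_pow_smul (hM : ∀ i, ∀ x : M i, x ≠ 1 → ∀ n ≠ 0, x ^ n ≠ 1)
    {L : List (Σ i, M i)} {a b : Σ i, M i} (hL : IsReduced (a :: L ++ [b])) {n : ℕ} (hn : n ≠ 0)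
    {w : Word M} (hw : w.toList.head? ≠ some ⟨b.1, b.2⁻¹⟩) :
    (listProd (a :: L ++ [b]) ^ n • w).toList.head? = some a :=
  head?_listProd_pow_smul_of_inner
    (fstIdx_listProd_pow_smul hM (hL.infix ⟨[a], [b], rfl⟩) hn) hL hn hw

/-- The list of letters of the inverse of a reduced word. -/
def invList (L : List (Σ i, M i)) : List (Σ i, M i) :=
  (L.map fun l => ⟨l.1, l.2⁻¹⟩).reverse

omit [DecidableEq ι] [∀ i, DecidableEq (M i)] in
theorem listProd_invList (L : List (Σ i, M i)) : listProd (invList L) = (listProd L)⁻¹ := by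
  induction L with
  | nil => simp [invList]
  | cons a L ih =>
    rw [listProd_cons, mul_inv_rev, ← ih]
    simp [invList]

omit [DecidableEq ι] [∀ i, DecidableEq (M i)] in
theorem IsReduced.invList {L : List (Σ i, M i)} (hL : IsReduced L) : IsReduced (invList L) := by
  refine ⟨?_, ?_⟩
  · simp only [Word.invList, List.mem_reverse, List.mem_map]
    rintro _ ⟨l, hl, rfl⟩
    exact inv_ne_one.2 (hL.1 l hl)
  · rw [Word.invList, List.isChain_reverse, List.isChain_map]
    exact hL.2.imp fun _ _ h => h.symm

/-- The letters with which powers of `listProd (a :: L ++ [b])` can start. -/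
def endLetters (a b : Σ i, M i) : Set (Σ i, M i) := {a, ⟨b.1, b.2⁻¹⟩}

theorem head?_listProd_zpow_smul (hM : ∀ i, ∀ x : M i, x ≠ 1 → ∀ n ≠ 0, x ^ n ≠ 1)
    {L : List (Σ i, M i)} {a b : Σ i, M i} (hL : IsReduced (a :: L ++ [b])) {n : ℤ} (hn : n ≠ 0)
    {w : Word M} (hw : ∀ l ∈ endLetters a b, w.toList.head? ≠ some l) :
    ∃ l ∈ endLetters a b, (listProd (a :: L ++ [b]) ^ n • w).toList.head? = some l := by
  obtain ⟨k, rfl | rfl⟩ := n.eq_nat_or_neg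
  · exact ⟨a, .inl rfl, by
      simpa using head?_listProd_pow_smul hM hL (by simpa using hn) (hw _ (.inr rfl))⟩
  · refine ⟨_, .inr rfl, ?_⟩
    have hinv : Word.invList (a :: L ++ [b]) =
        ⟨b.1, b.2⁻¹⟩ :: Word.invList L ++ [⟨a.1, a.2⁻¹⟩] := by simp [Word.invList]
    rw [zpow_neg, ← inv_zpow, ← listProd_invList, zpow_natCast, hinv]
    exact head?_listProd_pow_smul hM (hinv ▸ hL.invList) (by simpa using hn)
      (by simpa using hw a (.inl rfl))

/-- An element of the subgroup of the free product generated by subgroups `H i` of the factors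
moves every word starting with a letter in `T` to a word not starting with a letter in `T`,
provided that distinct letters in `T` represent distinct nontrivial cosets of the `H i`. -/
theorem head?_smul_notMem {H : ∀ i, Subgroup (M i)} {T : Set (Σ i, M i)}
    (hT : ∀ l ∈ T, l.2 ∉ H l.1)
    (hT' : ∀ i, ∀ k ∈ H i, ∀ x : M i, ⟨i, x⟩ ∈ T → ⟨i, k * x⟩ ∈ T → k = 1)
    {h : CoprodI M} (hh : h ∈ ⨆ i, (H i).map (of : M i →* CoprodI M)) (hh1 : h ≠ 1)
    {v : Word M} {t : Σ i, M i} (ht : t ∈ T) (hv : v.toList.head? = some t) :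
    ∀ l ∈ T, (h • v).toList.head? ≠ some l := by
  set f := CoprodI.lift fun i => (of : M i →* CoprodI M).comp (H i).subtype with hf
  obtain ⟨h, rfl⟩ : h ∈ f.range := by
    rw [hf, range_eq_iSup]
    simpa [MonoidHom.range_comp] using hh
  classical
  obtain ⟨u, rfl⟩ := (Word.equiv (M := fun i => H i)).symm.surjective h
  change f u.prod ≠ 1 at hh1
  change ∀ l ∈ T, (f u.prod • v).toList.head? ≠ some l
  suffices u.fstIdx ≠ none →
      (f u.prod • v).fstIdx = u.fstIdx ∧ ∀ l ∈ T, (f u.prod • v).toList.head? ≠ some l by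
    refine (this fun hu => hh1 ?_).2
    obtain rfl : u = empty := by
      ext1
      simpa [fstIdx] using hu
    simp
  clear hh hh1
  induction u using consRecOn with
  | empty => simp [fstIdx]
  | cons i k u h1 h2 ih =>
    have hk : (k : M i) ≠ 1 := by simpa using h2
    rw [fstIdx_cons, prod_cons, map_mul, mul_smul, hf, lift_of, ← hf]
    simp only [MonoidHom.comp_apply, Subgroup.subtype_apply]
    intro _
    by_cases hut : (f u.prod • v).fstIdx = some i
    · by_cases hu : u.fstIdx = none
      · obtain rfl : u = empty := by
          ext1
          simpa [fstIdx] using hu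
        rw [prod_empty, map_one, one_smul] at hut ⊢
        obtain ⟨j, x⟩ := t
        rw [fstIdx_eq_of_head? hv] at hut
        obtain rfl := Option.some_inj.1 hut
        have := head?_of_smul_of_head? (x := (k : M j)) hv fun hx => hT _ ht <| by
          rw [eq_inv_of_mul_eq_one_right hx]
          exact inv_mem k.2
        refine ⟨fstIdx_eq_of_head? this, fun l hl hl' => hk (hT' j k k.2 x ht ?_)⟩
        rw [this, Option.some_inj] at hl'
        rwa [hl']
      · exact absurd ((ih hu).1.symm.trans hut) h1
    · have := head?_of_smul hk hut
      refine ⟨fstIdx_eq_of_head? this, fun l hl hl' => hT l hl ?_⟩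
      rw [this, Option.some_inj] at hl'
      subst hl'
      exact k.2

end Monoid.CoprodI.Word

section Transfer

variable {P Q : Type*} [Group P] [Group Q]

theorem Monoid.CoprodI.lift_subtype_surjective {K : Bool → Subgroup P}
    (hK : K true ⊔ K false = ⊤) :
    Function.Surjective (Monoid.CoprodI.lift fun b => (K b).subtype) := by
  rw [← MonoidHom.range_eq_top, Monoid.CoprodI.range_eq_iSup, iSup_bool_eq]
  simpa using hK

theorem Monoid.CoprodI.lift_subtype_injective {K : Bool → Subgroup P}
    (ψ : P →* Monoid.CoprodI fun b => K b) (hψ : ∀ b (k : K b), ψ k = Monoid.CoprodI.of (M := fun b => K b) k) :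
    Function.Injective (Monoid.CoprodI.lift fun b => (K b).subtype) := by
  have : ψ.comp (Monoid.CoprodI.lift fun b => (K b).subtype) = MonoidHom.id _ := by
    ext b k : 2
    simp [hψ]
  exact Function.LeftInverse.injective (DFunLike.congr_fun this)

/-- The subgroups of a free product given by its two factors. -/
def coprodFactor (P Q : Type*) [Group P] [Group Q] : Bool → Subgroup (P ∗ Q)
  | true => (Monoid.Coprod.inl : P →* P ∗ Q).range
  | false => (Monoid.Coprod.inr : Q →* P ∗ Q).range

theorem lift_coprodFactor_surjective :
    Function.Surjective (Monoid.CoprodI.lift fun b => (coprodFactor P Q b).subtype) :=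
  Monoid.CoprodI.lift_subtype_surjective Monoid.Coprod.range_inl_sup_range_inr

theorem lift_coprodFactor_injective :
    Function.Injective (Monoid.CoprodI.lift fun b => (coprodFactor P Q b).subtype) := by
  refine Monoid.CoprodI.lift_subtype_injective (Monoid.Coprod.lift
    ((Monoid.CoprodI.of (M := fun b => coprodFactor P Q b) (i := true)).comp
      (Monoid.Coprod.inl.codRestrict (coprodFactor P Q true) fun x => ⟨x, rfl⟩))
    ((Monoid.CoprodI.of (M := fun b => coprodFactor P Q b) (i := false)).comp
      (Monoid.Coprod.inr.codRestrict (coprodFactor P Q false) fun x => ⟨x, rfl⟩))) ?_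
  rintro (_ | _) ⟨_, x, rfl⟩ <;> simp <;> rfl

/-- The ping-pong criterion for the independence of `g` from `H`. -/
theorem phi_injective_of_ping_pong {α : Type*} [MulAction P α] {H : Subgroup P} {g : P} {S : Set α}
    (hS : S.Nonempty) (hSc : Sᶜ.Nonempty) (hH : ∀ h ∈ H, h ≠ 1 → ∀ w ∈ S, h • w ∉ S)
    (hg : ∀ n : ℤ, n ≠ 0 → ∀ w ∉ S, g ^ n • w ∈ S) : Function.Injective (phi H g) := by
  have hinj : Function.Injective (Monoid.CoprodI.lift fun b =>
      (phi H g).comp (coprodFactor H (FreeGroup Unit) b).subtype) := by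
    refine Monoid.CoprodI.lift_injective_of_ping_pong _ (.inr ⟨false, ?_⟩)
      (fun b => if b then Sᶜ else S) ?_ ?_ ?_
    · have : Infinite (coprodFactor H (FreeGroup Unit) false) := by
        have : Infinite (FreeGroup Unit) := FreeGroup.freeGroupUnitEquivInt.infinite_iff.2 inferInstance
        exact Infinite.of_injective _
          (MonoidHom.ofInjective (Monoid.Coprod.inr_injective (M := H) (N := FreeGroup Unit))).injective
      exact (Cardinal.natCast_lt_aleph0 (n := 3)).le.trans (Cardinal.aleph0_le_mk _)
    · rintro (_ | _) <;> simpa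
    · rintro (_ | _) (_ | _) hb <;>
        simp_all [Function.onFun, disjoint_compl_left, disjoint_compl_right]
    · rintro (_ | _) (_ | _) hb ⟨_, x, rfl⟩ hx
      · simp at hb
      · obtain ⟨n, rfl⟩ := FreeGroup.freeGroupUnitEquivInt.symm.surjective x
        have hx' : (FreeGroup.of () : FreeGroup Unit) ^ n ≠ 1 := fun h => hx (by
          ext1
          simpa [FreeGroup.freeGroupUnitEquivInt] using congrArg (Monoid.Coprod.inr : _ →* H ∗ FreeGroup Unit) h)
        have hn : n ≠ 0 := fun h => hx' (by rw [h, zpow_zero])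
        rintro _ ⟨w, hw, rfl⟩
        simpa [phi, FreeGroup.freeGroupUnitEquivInt] using hg n hn w (by simpa using hw)
      · have hx' : (x : P) ≠ 1 := fun h => hx (by
          obtain rfl : x = 1 := by simpa using h
          ext1
          simp)
        rintro _ ⟨w, hw, rfl⟩
        simpa [phi] using hH x x.2 hx' w (by simpa using hw)
      · simp at hb
  have hcomp : Monoid.CoprodI.lift (fun b =>
      (phi H g).comp (coprodFactor H (FreeGroup Unit) b).subtype) =
      (phi H g).comp (Monoid.CoprodI.lift fun b => (coprodFactor H _ b).subtype) := by
    ext b k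
    simp
  rw [hcomp, MonoidHom.coe_comp] at hinj
  exact hinj.of_comp_right lift_coprodFactor_surjective

theorem Monoid.CoprodI.lift_of_comp_injective {ι : Type*} {M N : ι → Type*} [∀ i, Group (M i)]
    [∀ i, Group (N i)] {f : ∀ i, M i →* N i} (hf : ∀ i, Function.Injective (f i)) :
    Function.Injective (Monoid.CoprodI.lift fun i => (of : N i →* CoprodI N).comp (f i)) := by
  classical
  rw [injective_iff_map_eq_one]
  intro x hx
  obtain ⟨w, rfl⟩ := (Word.equiv (M := M)).symm.surjective x
  change lift _ w.prod = 1 at hx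
  let w' : Word N :=
    { toList := w.toList.map fun l => ⟨l.1, f l.1 l.2⟩
      ne_one := by
        simp only [List.mem_map]
        rintro _ ⟨l, hl, rfl⟩
        exact (map_ne_one_iff _ (hf l.1)).2 (w.ne_one l hl)
      chain_ne := by
        rw [List.isChain_map]
        exact w.chain_ne }
  have hw' : w'.prod = lift (fun i => (of : N i →* CoprodI N).comp (f i)) w.prod := by
    simp [w', Word.prod, map_list_prod, Function.comp_def]
  have : w' = Word.empty := Word.prod_injective (hw'.trans hx)
  have : w = Word.empty := by
    ext1
    simpa [w', Word.ext_iff] using this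
  subst this
  rfl

/-- A homomorphism respecting decompositions into free factors is injective if it is injective on
both factors. -/
theorem injective_of_injOn_factors {K : Bool → Subgroup P} {K' : Bool → Subgroup Q}
    (hK : K true ⊔ K false = ⊤)
    (hK' : Function.Injective (Monoid.CoprodI.lift fun b => (K' b).subtype))
    {θ : P →* Q} (hle : ∀ b, ∀ k ∈ K b, θ k ∈ K' b) (hinj : ∀ b, Set.InjOn θ (K b)) :
    Function.Injective θ := by
  let f : ∀ b, K b →* K' b := fun b => (θ.comp (K b).subtype).codRestrict (K' b)
    fun k => hle b k k.2
  have hf : ∀ b, Function.Injective (f b) := fun b x y hxy =>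
    Subtype.ext (hinj b x.2 y.2 (congrArg Subtype.val hxy))
  have hcomp : θ.comp (Monoid.CoprodI.lift fun b => (K b).subtype) =
      (Monoid.CoprodI.lift fun b => (K' b).subtype).comp
        (Monoid.CoprodI.lift fun b => Monoid.CoprodI.of.comp (f b)) := by
    ext b k
    simp [f]
    rfl
  have := hK'.comp (Monoid.CoprodI.lift_of_comp_injective hf)
  rw [← MonoidHom.coe_comp, ← hcomp, MonoidHom.coe_comp] at this
  exact this.of_comp_right (Monoid.CoprodI.lift_subtype_surjective hK)

end Transfer

section FreeProduct

variable {ι : Type*} {M : ι → Type*} [∀ i, Group (M i)]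

open Monoid.CoprodI in
theorem Monoid.CoprodI.phi_injective_of_endLetters [DecidableEq ι] [∀ i, DecidableEq (M i)]
    (hM : ∀ i, ∀ x : M i, x ≠ 1 → ∀ n ≠ 0, x ^ n ≠ 1) {H : ∀ i, Subgroup (M i)}
    {L : List (Σ i, M i)} {a b : Σ i, M i} (hL : Word.IsReduced (a :: L ++ [b]))
    (hT : ∀ l ∈ Word.endLetters a b, l.2 ∉ H l.1)
    (hT' : ∀ i, ∀ k ∈ H i, ∀ x : M i, ⟨i, x⟩ ∈ Word.endLetters a b →
      ⟨i, k * x⟩ ∈ Word.endLetters a b → k = 1) :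
    Function.Injective (phi (⨆ i, (H i).map (of : M i →* CoprodI M))
      (Word.listProd (a :: L ++ [b]))) := by
  refine phi_injective_of_ping_pong
    (S := {w : Word M | ∃ l ∈ Word.endLetters a b, w.toList.head? = some l})
    ⟨⟨_, hL.1, hL.2⟩, a, .inl rfl, rfl⟩ ⟨Word.empty, by simp⟩ ?_ ?_
  · rintro h hh hh1 w ⟨t, ht, hw⟩ ⟨l, hl, hl'⟩
    exact Word.head?_smul_notMem hT hT' hh hh1 ht hw l hl hl'
  · intro n hn w hw
    exact Word.head?_listProd_zpow_smul hM hL hn fun l hl hl' => hw ⟨l, hl, hl'⟩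

open Monoid.CoprodI in
/-- In a free product of torsion-free groups, every element is, up to multiplication on both sides
by elements of the subgroup generated by subgroups of the factors, in one of the factors or
independent of this subgroup. -/
theorem Monoid.CoprodI.exists_mul_mem_range_of_or_phi_injective
    (hM : ∀ i, ∀ x : M i, x ≠ 1 → ∀ n ≠ 0, x ^ n ≠ 1) (H : ∀ i, Subgroup (M i)) (g : CoprodI M) :
    ∃ h ∈ ⨆ i, (H i).map (of : M i →* CoprodI M), ∃ h' ∈ ⨆ i, (H i).map (of : M i →* CoprodI M),
      (h * g * h' = 1 ∨ ∃ (i : ι) (x : M i), h * g * h' = of x) ∨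
      Function.Injective (phi (⨆ i, (H i).map (of : M i →* CoprodI M)) (h * g * h')) := by
  classical
  set K := ⨆ i, (H i).map (of : M i →* CoprodI M) with hK
  have hofK : ∀ i, ∀ x ∈ H i, of x ∈ K := fun i x hx =>
    Subgroup.mem_iSup_of_mem i (Subgroup.mem_map_of_mem _ hx)
  obtain ⟨L, ⟨hL, h, hh, h', hh', hprod⟩, hmin⟩ :=
    exists_minimalFor_of_wellFoundedLT
      (fun L : List (Σ i, M i) => Word.IsReduced L ∧ ∃ h ∈ K, ∃ h' ∈ K, h * g * h' = Word.listProd L)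
      List.length ⟨(Word.equiv g).toList, Word.isReduced_toList _, 1, one_mem _, 1, one_mem _, by
        rw [one_mul, mul_one]
        exact (Word.equiv.symm_apply_apply g).symm⟩
  rcases L with _ | ⟨⟨i, x⟩, L⟩
  · exact ⟨h, hh, h', hh', .inl (.inl hprod)⟩
  rcases L.eq_nil_or_concat' with rfl | ⟨L, ⟨j, y⟩, rfl⟩
  · exact ⟨h, hh, h', hh', .inl (.inr ⟨i, x, by simpa using hprod⟩)⟩
  rw [← List.cons_append] at hL hmin hprod
  have hx : x ∉ H i := fun hx => by
    have := hmin (j := L ++ [⟨j, y⟩]) ⟨hL.infix ⟨[⟨i, x⟩], [], by simp⟩, (of x)⁻¹ * h,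
      mul_mem (inv_mem (hofK i x hx)) hh, h', hh', by
        rw [mul_assoc, mul_assoc, ← mul_assoc h, hprod]
        simp⟩ (by simp)
    simp at this
  have hy : y ∉ H j := fun hy => by
    have := hmin (j := ⟨i, x⟩ :: L) ⟨hL.infix ⟨[], [⟨j, y⟩], by simp⟩, h, hh, h' * (of y)⁻¹,
      mul_mem hh' (inv_mem (hofK j y hy)), by
        rw [← mul_assoc, hprod]
        simp [mul_assoc]⟩ (by simp)
    simp at this
  by_cases hxy : ∃ k ∈ H i, (⟨i, k * x⟩ : Σ i, M i) = ⟨j, y⁻¹⟩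
  · obtain ⟨k, hk, hxy⟩ := hxy
    obtain ⟨rfl, hxy⟩ := Sigma.mk.inj_iff.1 hxy
    obtain rfl : y = x⁻¹ * k⁻¹ := by rw [← inv_inv y, ← eq_of_heq hxy, mul_inv_rev]
    refine ⟨h, hh, h' * of k, mul_mem hh' (hofK i k hk), .inr ?_⟩
    have hprod' : h * g * (h' * of k) = Word.listProd (⟨i, x⟩ :: L ++ [⟨i, x⁻¹⟩]) := by
      rw [← mul_assoc, hprod]
      simp [mul_assoc]
    rw [hprod']
    have hx1 : x ≠ 1 := hL.1 ⟨i, x⟩ (by simp)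
    refine phi_injective_of_endLetters hM ?_ ?_ ?_
    · rw [Word.isReduced_append] at hL ⊢
      refine ⟨hL.1, ⟨by simpa using hx1, by simp⟩, ?_⟩
      simpa using hL.2.2
    · rintro l (rfl | rfl)
      · exact hx
      · simpa using hx
    · rintro l k' hk' z (hz | hz) (hkz | hkz) <;>
      · obtain ⟨rfl, hz⟩ := Sigma.mk.inj_iff.1 hz
        obtain ⟨-, hkz⟩ := Sigma.mk.inj_iff.1 hkz
        simpa [eq_of_heq hz] using eq_of_heq hkz
  · refine ⟨h, hh, h', hh', .inr ?_⟩
    rw [hprod]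
    refine phi_injective_of_endLetters hM hL ?_ ?_
    · rintro l (rfl | rfl)
      · exact hx
      · simpa using hy
    · rintro l k hk z (hz | hz) (hkz | hkz)
      · exact mul_eq_right.1 (eq_of_heq (Sigma.mk.inj_iff.1 (hkz.trans hz.symm)).2)
      · obtain ⟨rfl, hz⟩ := Sigma.mk.inj_iff.1 hz
        obtain rfl := eq_of_heq hz
        exact absurd ⟨k, hk, hkz⟩ hxy
      · obtain ⟨rfl, hkz⟩ := Sigma.mk.inj_iff.1 hkz
        obtain rfl := eq_of_heq hkz
        exact absurd ⟨k⁻¹, inv_mem hk, by rw [inv_mul_cancel_left]; exact hz⟩ hxy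
      · exact mul_eq_right.1 (eq_of_heq (Sigma.mk.inj_iff.1 (hkz.trans hz.symm)).2)

end FreeProduct

section Depends

variable {P Q : Type*} [Group P] [Group Q]

@[simp]
theorem phi_inl (H : Subgroup P) (g : P) (h : H) : phi H g (Monoid.Coprod.inl h) = h := by
  simp [phi]

@[simp]
theorem phi_inr_of (H : Subgroup P) (g : P) (u : Unit) :
    phi H g (Monoid.Coprod.inr (FreeGroup.of u)) = g := by
  simp [phi]

theorem phi_mul_mul_injective {H : Subgroup P} {g h h' : P} (hh : h ∈ H) (hh' : h' ∈ H)
    (hg : Function.Injective (phi H g)) : Function.Injective (phi H (h * g * h')) := by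
  let α : H → H → H ∗ FreeGroup Unit →* H ∗ FreeGroup Unit := fun k k' =>
    Monoid.Coprod.lift Monoid.Coprod.inl (FreeGroup.lift fun _ =>
      Monoid.Coprod.inl k * Monoid.Coprod.inr (FreeGroup.of ()) * Monoid.Coprod.inl k')
  have hα : ∀ k k', (α k⁻¹ k'⁻¹).comp (α k k') = MonoidHom.id _ := by
    intro k k'
    ext u <;> simp [α, mul_assoc]
  have hphi : phi H (h * g * h') = (phi H g).comp (α ⟨h, hh⟩ ⟨h', hh'⟩) := by
    ext u <;> simp [α]
  rw [hphi, MonoidHom.coe_comp]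
  exact hg.comp (Function.LeftInverse.injective (DFunLike.congr_fun (hα _ _)))

theorem phi_injective_of_le {H H' : Subgroup P} (hle : H ≤ H') {g : P}
    (hg : Function.Injective (phi H' g)) : Function.Injective (phi H g) := by
  have hphi : phi H g = (phi H' g).comp
      (Monoid.Coprod.map (Subgroup.inclusion hle) (MonoidHom.id _)) := by
    ext u <;> simp
  rw [hphi, MonoidHom.coe_comp]
  refine hg.comp (injective_of_injOn_factors (K := coprodFactor H (FreeGroup Unit))
    Monoid.Coprod.range_inl_sup_range_inr lift_coprodFactor_injective ?_ ?_)
  · rintro (_ | _) _ ⟨x, rfl⟩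
    · exact ⟨x, by simp⟩
    · exact ⟨Subgroup.inclusion hle x, by simp⟩
  · rintro (_ | _) _ ⟨x, rfl⟩ _ ⟨y, rfl⟩ hxy
    · rw [Monoid.Coprod.inr_injective (by simpa using hxy : Monoid.Coprod.inr x = _)]
    · have := Monoid.Coprod.inl_injective (by simpa using hxy)
      rw [Subgroup.inclusion_injective hle this]

theorem phi_map_injective (e : P ≃* Q) {H : Subgroup P} {g : P}
    (hg : Function.Injective (phi H g)) :
    Function.Injective (phi (H.map (e : P →* Q)) (e g)) := by
  have hphi : (e : P →* Q).comp (phi H g) = (phi (H.map (e : P →* Q)) (e g)).comp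
      ((e.subgroupMap H).coprodCongr (MulEquiv.refl (FreeGroup Unit))).toMonoidHom := by
    ext u
    · simp [phi]
    · simp [phi]
  have hinj := e.injective.comp hg
  change Function.Injective ((e : P →* Q).comp (phi H g)) at hinj
  rw [hphi, MonoidHom.coe_comp] at hinj
  exact hinj.of_comp_right (MulEquiv.surjective _)

theorem phi_iSup_injective {K H : Bool → Subgroup P}
    (hK : Function.Injective (Monoid.CoprodI.lift fun b => (K b).subtype)) (hle : ∀ b, H b ≤ K b)
    {b : Bool} {g : P} (hgK : g ∈ K b) (hg : Function.Injective (phi (H b) g)) :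
    Function.Injective (phi (⨆ b, H b) g) := by
  let A := (Monoid.Coprod.map (Subgroup.inclusion (le_iSup H b))
    (MonoidHom.id (FreeGroup Unit))).range
  let B := ((Monoid.Coprod.inl : _ →* (⨆ b, H b : Subgroup P) ∗ FreeGroup Unit).comp
    (Subgroup.inclusion (le_iSup H !b))).range
  have hAphi : ∀ x, phi (⨆ b, H b) g (Monoid.Coprod.map (Subgroup.inclusion (le_iSup H b))
      (MonoidHom.id (FreeGroup Unit)) x) = phi (H b) g x := by
    refine DFunLike.congr_fun (f := (phi (⨆ b, H b) g).comp _) ?_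
    ext u <;> simp
  have hAB : A ⊔ B = ⊤ := by
    rw [eq_top_iff, ← Monoid.Coprod.range_inl_sup_range_inr, sup_le_iff]
    constructor
    · have hH : ⨆ b, H b ≤ ((A ⊔ B).comap Monoid.Coprod.inl).map (⨆ b, H b).subtype := by
        refine iSup_le fun c x hx => ⟨⟨x, le_iSup H c hx⟩, ?_, rfl⟩
        by_cases hc : c = b
        · subst hc
          exact Subgroup.mem_sup_left ⟨Monoid.Coprod.inl ⟨x, hx⟩, by simp; rfl⟩
        · obtain rfl := Bool.eq_not_of_ne hc
          exact Subgroup.mem_sup_right ⟨⟨x, hx⟩, rfl⟩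
      rintro _ ⟨x, rfl⟩
      obtain ⟨y, hy, hyx⟩ := hH x.2
      obtain rfl := Subtype.ext hyx
      exact hy
    · rintro _ ⟨x, rfl⟩
      exact Subgroup.mem_sup_left ⟨Monoid.Coprod.inr x, by simp⟩
  refine injective_of_injOn_factors (K := fun c => if c = b then A else B) ?_ hK ?_ ?_
  · cases b
    · simpa [sup_comm] using hAB
    · simpa using hAB
  · intro c k hk
    by_cases hc : c = b
    · subst hc
      simp only [if_true] at hk
      obtain ⟨x, rfl⟩ := hk
      rw [hAphi]
      have : (phi (H c) g).range ≤ K c := by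
        rw [phi, Monoid.Coprod.range_lift, sup_le_iff]
        constructor
        · simpa using hle c
        · rw [FreeGroup.range_lift_eq_closure, Subgroup.closure_le]
          rintro _ ⟨_, rfl⟩
          exact hgK
      exact this ⟨x, rfl⟩
    · simp only [hc, if_false] at hk
      obtain ⟨x, rfl⟩ := hk
      obtain rfl := Bool.eq_not_of_ne hc
      simpa using hle _ x.2
  · intro c
    by_cases hc : c = b
    · simp only [hc, if_true]
      rintro _ ⟨x, rfl⟩ _ ⟨y, rfl⟩ hxy
      rw [hAphi, hAphi] at hxy
      rw [hg hxy]
    · simp only [hc, if_false]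
      rintro _ ⟨x, rfl⟩ _ ⟨y, rfl⟩ hxy
      rw [Subtype.ext (by simpa using hxy : (x : P) = y)]

end Depends

theorem IsInternalFreeProduct.lift_bijective [Group F] {F₁ F₂ : Subgroup F}
    (hF : IsInternalFreeProduct F₁ F₂) :
    Function.Bijective (Monoid.CoprodI.lift fun b => (cond b F₁ F₂).subtype) := by
  let e : F₁ ∗ F₂ ≃* F := MulEquiv.ofBijective _ hF
  constructor
  · let of (b : Bool) := Monoid.CoprodI.of (M := fun b => ↥(cond b F₁ F₂)) (i := b)
    let ψ : F₁ ∗ F₂ →* Monoid.CoprodI fun b => ↥(cond b F₁ F₂) :=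
      Monoid.Coprod.lift (of true) (of false)
    refine Monoid.CoprodI.lift_subtype_injective (K := fun b => cond b F₁ F₂)
      (ψ.comp (e.symm : F →* F₁ ∗ F₂)) ?_
    have hl : ∀ x : F₁, e.symm x = Monoid.Coprod.inl x := fun x =>
      e.symm_apply_eq.2 (Monoid.Coprod.lift_apply_inl F₁.subtype F₂.subtype x).symm
    have hr : ∀ x : F₂, e.symm x = Monoid.Coprod.inr x := fun x =>
      e.symm_apply_eq.2 (Monoid.Coprod.lift_apply_inr F₁.subtype F₂.subtype x).symm
    rintro (_ | _) x
    · exact (congrArg ψ (hr x)).trans (Monoid.Coprod.lift_apply_inr (of true) (of false) x)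
    · exact (congrArg ψ (hl x)).trans (Monoid.Coprod.lift_apply_inl (of true) (of false) x)
  · refine Monoid.CoprodI.lift_subtype_surjective (K := fun b => cond b F₁ F₂) ?_
    have := MonoidHom.range_eq_top.2 hF.surjective
    rw [Monoid.Coprod.range_lift] at this
    simpa using this

/-- if `F = F₁ ∗ F₂`, `H₁ ≤ F₁`, `H₂ ≤ F₂` are finitely generated, and
`H = ⟨H₁, H₂⟩`, then `g` depends on `H` iff `g = h₁ c h₂` with `h₁, h₂ ∈ H` and `c`
depending on `H₁` or on `H₂`. -/
theorem depSet_free_product [Group F] [IsFreeGroup F] (F₁ F₂ : Subgroup F)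
    (hF : IsInternalFreeProduct F₁ F₂)
    (H₁ H₂ : Subgroup F) (hle₁ : H₁ ≤ F₁) (hle₂ : H₂ ≤ F₂)
    (hfg₁ : H₁.FG) (hfg₂ : H₂.FG) :
    ∀ g : F, Depends (H₁ ⊔ H₂) g ↔
      ∃ h₁ ∈ H₁ ⊔ H₂, ∃ h₂ ∈ H₁ ⊔ H₂, ∃ c : F,
        (Depends H₁ c ∨ Depends H₂ c) ∧ g = h₁ * c * h₂ := by
  classical
  let K : Bool → Subgroup F := fun b => cond b F₁ F₂
  let H : Bool → Subgroup F := fun b => cond b H₁ H₂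
  have hHK : ∀ b, H b ≤ K b := by rintro (_ | _) <;> assumption
  have hH : H₁ ⊔ H₂ = ⨆ b, H b := (iSup_bool_eq (f := H)).symm
  have hK := IsInternalFreeProduct.lift_bijective hF
  let e : Monoid.CoprodI (fun b => K b) ≃* F := MulEquiv.ofBijective _ hK
  have he : ∀ b (x : K b), e (Monoid.CoprodI.of x) = x := fun b x => Monoid.CoprodI.lift_of _ _
  have hmap : (⨆ b, ((H b).subgroupOf (K b)).map
      (Monoid.CoprodI.of (M := fun b => K b))).map
        (e : Monoid.CoprodI (fun b => K b) →* F) = H₁ ⊔ H₂ := by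
    rw [hH, Subgroup.map_iSup]
    refine iSup_congr fun b => ?_
    rw [Subgroup.map_map]
    have : (e : Monoid.CoprodI (fun b => K b) →* F).comp
        (Monoid.CoprodI.of (M := fun b => K b)) = (K b).subtype :=
      MonoidHom.ext (he b)
    rw [this, Subgroup.subgroupOf_map_subtype, inf_of_le_left (hHK b)]
  have hM : ∀ b, ∀ x : K b, x ≠ 1 → ∀ n ≠ 0, x ^ n ≠ 1 := fun b x hx n hn hxn => by
    have h1 : IsFreeGroup.toFreeGroup F (x : F) ^ n = 1 := by
      rw [← map_pow, ← Subgroup.coe_pow, hxn, Subgroup.coe_one, map_one]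
    exact hx (by simpa [hn] using h1)
  intro g
  constructor
  · intro hg
    obtain ⟨h, hh, h', hh', hred⟩ := Monoid.CoprodI.exists_mul_mem_range_of_or_phi_injective hM
      (fun b => (H b).subgroupOf (K b)) (e.symm g)
    have hmem : ∀ k ∈ ⨆ b, ((H b).subgroupOf (K b)).map
        (Monoid.CoprodI.of (M := fun b => K b)), e k ∈ H₁ ⊔ H₂ := fun k hk =>
      hmap ▸ Subgroup.mem_map_of_mem _ hk
    have heg : e (h * e.symm g * h') = e h * g * e h' := by simp
    have hg' : Depends (H₁ ⊔ H₂) (e h * g * e h') := fun hinj => hg <| by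
      simpa [mul_assoc] using
        phi_mul_mul_injective (inv_mem (hmem h hh)) (inv_mem (hmem h' hh')) hinj
    obtain ⟨b, hb⟩ : ∃ b, e h * g * e h' ∈ K b := by
      rcases hred with (hred | ⟨b, x, hred⟩) | hred
      · exact ⟨true, by rw [← heg, hred, map_one]; exact one_mem _⟩
      · exact ⟨b, by rw [← heg, hred, he]; exact x.2⟩
      · have := phi_map_injective e hred
        rw [hmap, heg] at this
        exact absurd this hg'
    have hdep : Depends (H b) (e h * g * e h') := fun hinj =>
      hg' (hH ▸ phi_iSup_injective hK.injective hHK hb hinj)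
    refine ⟨(e h)⁻¹, inv_mem (hmem h hh), (e h')⁻¹, inv_mem (hmem h' hh'), e h * g * e h', ?_,
      by simp [mul_assoc]⟩
    cases b
    · exact .inr hdep
    · exact .inl hdep
  · rintro ⟨h, hh, h', hh', c, hc, rfl⟩ hinj
    have hinj' : Function.Injective (phi (H₁ ⊔ H₂) c) := by
      simpa [mul_assoc] using phi_mul_mul_injective (inv_mem hh) (inv_mem hh') hinj
    exact hc.elim (· (phi_injective_of_le le_sup_left hinj'))
      (· (phi_injective_of_le le_sup_right hinj'))
end

section
/- Let H be a dependence-closed subgroup of a free group F and let K be a free factor of H. Then K is dependence-closed. -/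
open scoped Monoid.Coprod

variable {F : Type*}

/-- `K` is a free factor of `H`: there is `K' ≤ H` such that `H` is the internal free
product `K ∗ K'`, i.e. the canonical homomorphism `K ∗ K' → F` induced by the inclusions
is injective with range `H`. -/
def IsFreeFactorOf [Group F] (K H : Subgroup F) : Prop :=
  K ≤ H ∧ ∃ K' : Subgroup F, K' ≤ H ∧
    Function.Injective (Monoid.Coprod.lift K.subtype K'.subtype) ∧
    (Monoid.Coprod.lift K.subtype K'.subtype).range = H

namespace Monoid.CoprodI.NeWord

variable {ι : Type*} {G : ι → Type*} [∀ i, Group (G i)]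

theorem exists_head_split {i j : ι} (w : NeWord G i j) :
    (i = j ∧ ∃ a : G i, a ≠ 1 ∧ w.prod = of a) ∨
      ∃ (a : G i) (k : ι) (v : NeWord G k j), a ≠ 1 ∧ i ≠ k ∧ w.prod = of a * v.prod ∧
        v.toList.length < w.toList.length := by
  induction w with
  | singleton x hx => exact .inl ⟨rfl, x, hx, by simp⟩
  | append w₁ hne w₂ ih₁ _ =>
    right
    rcases ih₁ with ⟨rfl, a, ha, h⟩ | ⟨a, k, v, ha, hk, h, hl⟩
    · exact ⟨a, _, w₂, ha, hne, by simp [h],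
        by simpa using List.length_pos_iff.2 w₁.toList_ne_nil⟩
    · exact ⟨a, k, v.append hne w₂, ha, hk, by simp [h, mul_assoc], by simpa using hl⟩

theorem exists_last_split {i j : ι} (w : NeWord G i j) :
    (i = j ∧ ∃ b : G j, b ≠ 1 ∧ w.prod = of b) ∨
      ∃ (b : G j) (k : ι) (v : NeWord G i k), b ≠ 1 ∧ k ≠ j ∧ w.prod = v.prod * of b ∧
        v.toList.length < w.toList.length := by
  induction w with
  | singleton x hx => exact .inl ⟨rfl, x, hx, by simp⟩
  | append w₁ hne w₂ _ ih₂ =>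
    right
    rcases ih₂ with ⟨rfl, b, hb, h⟩ | ⟨b, k, v, hb, hk, h, hl⟩
    · exact ⟨b, _, w₁, hb, hne, by simp [h],
        by simpa using List.length_pos_iff.2 w₂.toList_ne_nil⟩
    · exact ⟨b, k, w₁.append hne v, hb, hk, by simp [h, mul_assoc], by simpa using hl⟩

/-- In a free product of torsion-free groups, the first and last factors of a nonempty reduced
word are unchanged by taking positive powers. -/
theorem exists_prod_eq_pow_succ [∀ i, IsMulTorsionFree (G i)] {i j : ι} (w : NeWord G i j)
    (n : ℕ) : ∃ w' : NeWord G i j, w'.prod = w.prod ^ (n + 1) := by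
  induction hN : w.toList.length using Nat.strong_induction_on generalizing i j n with
  | _ N ih =>
  subst hN
  by_cases hij : i = j
  · subst hij
    rcases w.exists_head_split with ⟨-, a, ha, h⟩ | ⟨a, k, v, ha, hk, h, hl⟩
    · exact ⟨singleton (a ^ (n + 1)) (by simpa using ha), by simp [h]⟩
    · rcases v.exists_last_split with ⟨rfl, -⟩ | ⟨b, m, c, hb, hm, h', hl'⟩
      · exact (hk rfl).elim
      · by_cases hba : b * a = 1
        · obtain ⟨c', hc'⟩ := ih _ (hl'.trans hl) c n rfl
          obtain rfl := eq_inv_of_mul_eq_one_left hba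
          refine ⟨((singleton a ha).append hk c').append hm (singleton a⁻¹ hb), ?_⟩
          simp [h, h', hc', ← mul_assoc, conj_pow]
        · suffices ∃ d : NeWord G k m, of a * d.prod * of b = w.prod ^ (n + 1) by
            obtain ⟨d, hd⟩ := this
            exact ⟨((singleton a ha).append hk d).append hm (singleton b hb), by simp [hd]⟩
          clear ih
          induction n with
          | zero => exact ⟨c, by simp [h, h', mul_assoc]⟩
          | succ n ihn =>
            obtain ⟨d, hd⟩ := ihn
            refine ⟨(d.append hm (singleton (b * a) hba)).append hk c, ?_⟩
            rw [pow_succ, ← hd]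
            simp [h, h', mul_assoc]
  · clear ih
    induction n with
    | zero => exact ⟨w, by simp⟩
    | succ n ihn =>
      obtain ⟨d, hd⟩ := ihn
      exact ⟨d.append (Ne.symm hij) w, by rw [pow_succ, ← hd]; simp⟩

theorem exists_prod_eq_zpow [∀ i, IsMulTorsionFree (G i)] {i : ι} (w : NeWord G i i)
    {n : ℤ} (hn : n ≠ 0) : ∃ w' : NeWord G i i, w'.prod = w.prod ^ n := by
  obtain ⟨m, rfl | rfl⟩ := n.eq_nat_or_neg
  · obtain ⟨m, rfl⟩ := Nat.exists_eq_succ_of_ne_zero (by simpa using hn)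
    simpa using mod_cast w.exists_prod_eq_pow_succ m
  · obtain ⟨m, rfl⟩ := Nat.exists_eq_succ_of_ne_zero (by simpa using hn)
    obtain ⟨w', hw'⟩ := w.inv.exists_prod_eq_pow_succ m
    exact ⟨w', by rw [hw', inv_prod, zpow_neg, zpow_natCast, inv_pow]⟩

theorem prod_ne_one {i j : ι} (w : NeWord G i j) : w.prod ≠ 1 := by
  classical
  intro h
  have h' : w.toWord = Word.empty := Word.equiv.symm.injective (by simpa [Word.equiv, prod] using h)
  exact w.toList_ne_nil (congrArg Word.toList h')

theorem exists_prod_eq {x : CoprodI G} (hx : x ≠ 1) :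
    ∃ (i j : ι) (w : NeWord G i j), w.prod = x := by
  classical
  obtain ⟨i, j, w, hw⟩ := of_word (Word.equiv x) fun h => hx <| by
    simpa [Word.equiv] using congrArg Word.equiv.symm h
  exact ⟨i, j, w, by rw [prod, hw]; exact Word.equiv.symm_apply_apply x⟩

/-- In a free product of two groups, an element outside one factor is, up to multiplication on
both sides by elements of that factor, a reduced word that starts and ends in the other factor. -/
theorem exists_mul_mul_eq {G : Bool → Type*} [∀ b, Group (G b)] {i j : Bool}
    (w : NeWord G i j) :
    (∃ a : G false, w.prod = of a) ∨
      ∃ (a b : G false) (u : NeWord G true true), w.prod = of a * u.prod * of b := by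
  have key : ∀ {j : Bool} (v : NeWord G true j),
      ∃ (b : G false) (u : NeWord G true true), v.prod = u.prod * of b := by
    intro j v
    cases j with
    | true => exact ⟨1, v, by simp⟩
    | false =>
      rcases v.exists_last_split with ⟨h, -⟩ | ⟨b, k, u, -, hk, h, -⟩
      · cases h
      · obtain rfl : k = true := by simpa using hk
        exact ⟨b, u, h⟩
  cases i with
  | true =>
    obtain ⟨b, u, h⟩ := key w
    exact .inr ⟨1, b, u, by simpa using h⟩
  | false =>
    rcases w.exists_head_split with ⟨-, a, -, h⟩ | ⟨a, k, v, -, hk, h, -⟩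
    · exact .inl ⟨a, h⟩
    · obtain rfl : k = true := by simpa using hk.symm
      obtain ⟨b, u, h'⟩ := key v
      exact .inr ⟨a, b, u, by rw [h, h', mul_assoc]⟩

end Monoid.CoprodI.NeWord

open Monoid

/-- The subgroups `A` and `B`, as a family indexed by `Bool`. -/
def subgroupPair [Group F] (A B : Subgroup F) (b : Bool) : Subgroup F := cond b B A

/-- The binary free product of two subgroups is the free product of the family they form. -/
noncomputable def coprodEquivCoprodI [Group F] (A B : Subgroup F) :
    (↥A ∗ ↥B) ≃* CoprodI fun b => subgroupPair A B b :=
  MonoidHom.toMulEquiv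
    (Coprod.lift (CoprodI.of (M := fun b => subgroupPair A B b) (i := false))
      (CoprodI.of (M := fun b => subgroupPair A B b) (i := true)))
    (CoprodI.lift fun b => match b with
      | false => (Coprod.inl : ↥A →* ↥A ∗ ↥B)
      | true => (Coprod.inr : ↥B →* ↥A ∗ ↥B))
    (by
      ext <;> rfl)
    (by
      refine CoprodI.ext_hom _ _ fun b => ?_
      cases b <;> rfl)

theorem lift_coprodEquivCoprodI [Group F] (A B : Subgroup F) (x : ↥A ∗ ↥B) :
    CoprodI.lift (fun b => (subgroupPair A B b).subtype) (coprodEquivCoprodI A B x) =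
      Coprod.lift A.subtype B.subtype x := by
  suffices (CoprodI.lift (fun b => (subgroupPair A B b).subtype)).comp
      (coprodEquivCoprodI A B).toMonoidHom = Coprod.lift A.subtype B.subtype from
    DFunLike.congr_fun this x
  ext <;> simp [coprodEquivCoprodI] <;> rfl

theorem lift_subgroupPair_injective_iff [Group F] (A B : Subgroup F) :
    Function.Injective (CoprodI.lift fun b => (subgroupPair A B b).subtype) ↔
      Function.Injective (Coprod.lift A.subtype B.subtype) := by
  rw [← (funext (lift_coprodEquivCoprodI A B) : _ ∘ coprodEquivCoprodI A B = _),
    Function.Injective.of_comp_iff' _ (coprodEquivCoprodI A B).bijective]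

theorem isMulTorsionFree_of_isFreeGroup [Group F] [IsFreeGroup F] : IsMulTorsionFree F :=
  (IsFreeGroup.toFreeGroup F).injective.isMulTorsionFree (IsFreeGroup.toFreeGroup F).toMonoidHom

theorem phi_injective_of_lift_injective [Group F] [IsMulTorsionFree F] (K : Subgroup F) {u : F}
    (hu : u ≠ 1)
    (h : Function.Injective (Coprod.lift K.subtype (Subgroup.zpowers u).subtype)) :
    Function.Injective (phi K u) := by
  have hmem : ∀ z : FreeGroup Unit, ∃ n : ℤ, z = FreeGroup.of () ^ n := fun z => by
    induction z using FreeGroup.induction_on with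
    | C1 => exact ⟨0, by simp⟩
    | of x => exact ⟨1, by simp⟩
    | inv_of x _ => exact ⟨-1, by simp⟩
    | mul x y hx hy =>
      obtain ⟨m, rfl⟩ := hx
      obtain ⟨n, rfl⟩ := hy
      exact ⟨m + n, by rw [zpow_add]⟩
  let e : FreeGroup Unit →* Subgroup.zpowers u :=
    FreeGroup.lift fun _ => ⟨u, Subgroup.mem_zpowers u⟩
  have he : Function.Bijective e := by
    constructor
    · refine (injective_iff_map_eq_one e).2 fun z hz => ?_
      obtain ⟨n, rfl⟩ := hmem z
      have : u ^ n = 1 := by simpa [e] using congrArg Subtype.val hz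
      obtain rfl : n = 0 := by simpa [hu] using this
      simp
    · rintro ⟨_, n, rfl⟩
      exact ⟨FreeGroup.of () ^ n, by ext; simp [e]⟩
  have hphi : phi K u = (Coprod.lift K.subtype (Subgroup.zpowers u).subtype).comp
      (MulEquiv.coprodCongr (MulEquiv.refl K) (MulEquiv.ofBijective e he)).toMonoidHom := by
    ext <;> simp [phi, e]
  rw [hphi]
  exact h.comp (MulEquiv.injective _)

/-- If `K` and `K'` generate their free product in a torsion-free group, then a reduced word that
starts and ends in `K'` is independent of `K`. -/
theorem phi_injective_neWord [Group F] [IsMulTorsionFree F] {K K' : Subgroup F}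
    (h : Function.Injective (Coprod.lift K.subtype K'.subtype))
    (w : CoprodI.NeWord (fun b => subgroupPair K K' b) true true) :
    Function.Injective (phi K (CoprodI.lift (fun b => (subgroupPair K K' b).subtype) w.prod)) := by
  rw [← lift_subgroupPair_injective_iff] at h
  set ψ := CoprodI.lift fun b => (subgroupPair K K' b).subtype with hψ
  have hne : ∀ {i j} (v : CoprodI.NeWord (fun b => subgroupPair K K' b) i j), ψ v.prod ≠ 1 :=
    fun v hv => v.prod_ne_one (h (by simpa using hv))
  refine phi_injective_of_lift_injective K (hne w) ?_
  rw [← lift_subgroupPair_injective_iff]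
  refine (injective_iff_map_eq_one _).2 fun x hx => by_contra fun hx1 => ?_
  obtain ⟨i, j, v, rfl⟩ := CoprodI.NeWord.exists_prod_eq hx1
  suffices ∃ v' : CoprodI.NeWord (fun b => subgroupPair K K' b) i j, ψ v'.prod =
      CoprodI.lift (fun b => (subgroupPair K (Subgroup.zpowers (ψ w.prod)) b).subtype) v.prod by
    obtain ⟨v', hv'⟩ := this
    exact hne v' (hv'.trans hx)
  clear hx hx1
  induction v with
  | @singleton i a ha =>
    cases i with
    | false => exact ⟨.singleton (i := false) a ha, by simp [hψ]; rfl⟩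
    | true =>
      obtain ⟨_, n, rfl⟩ := a
      obtain ⟨v', hv'⟩ := w.exists_prod_eq_zpow (n := n) (by rintro rfl; exact ha (by ext; simp))
      exact ⟨v', by simp [hv']⟩
  | append _ hne _ ih₁ ih₂ =>
    obtain ⟨v₁, h₁⟩ := ih₁
    obtain ⟨v₂, h₂⟩ := ih₂
    exact ⟨v₁.append hne v₂, by simp [h₁, h₂]⟩

theorem phi_injective_mul_mul [Group F] {K : Subgroup F} {u : F} (a b : K)
    (h : Function.Injective (phi K u)) : Function.Injective (phi K (a * u * b)) := by
  let τ (a b : K) : (↥K ∗ FreeGroup Unit) →* ↥K ∗ FreeGroup Unit :=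
    Coprod.lift Coprod.inl
      (FreeGroup.lift fun _ => Coprod.inl a * Coprod.inr (FreeGroup.of ()) * Coprod.inl b)
  have hτ : (τ a⁻¹ b⁻¹).comp (τ a b) = .id _ := by
    ext <;> simp [τ, mul_assoc]
  have hphi : phi K (a * u * b) = (phi K u).comp (τ a b) := by
    ext <;> simp [phi, τ]
  rw [hphi]
  exact h.comp (Function.LeftInverse.injective (DFunLike.congr_fun hτ))

theorem IsFreeFactorOf.exists_retraction [Group F] {K H : Subgroup F} (hK : IsFreeFactorOf K H) :
    ∃ r : H →* K, r.comp (Subgroup.inclusion hK.1) = .id K := by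
  obtain ⟨hKH, K', -, hinj, rfl⟩ := hK
  refine ⟨Coprod.fst.comp (MonoidHom.ofInjective hinj).symm.toMonoidHom, ?_⟩
  ext k
  have : (MonoidHom.ofInjective hinj).symm (Subgroup.inclusion hKH k) = Coprod.inl k := by
    rw [MulEquiv.symm_apply_eq]
    ext
    simp [MonoidHom.ofInjective_apply]
  simp [this]

theorem Depends.of_isFreeFactorOf [Group F] {K H : Subgroup F} (hK : IsFreeFactorOf K H) {g : F}
    (hg : Depends K g) : Depends H g := by
  obtain ⟨r, hr⟩ := hK.exists_retraction
  refine fun h => hg ?_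
  have hphi : phi K g = (phi H g).comp (Coprod.map (Subgroup.inclusion hK.1) (.id _)) := by
    ext <;> simp [phi]
  have hleft : (Coprod.map r (.id (FreeGroup Unit))).comp
      (Coprod.map (Subgroup.inclusion hK.1) (.id _)) = .id _ := by
    rw [Coprod.map_comp_map, hr, MonoidHom.id_comp, Coprod.map_id_id]
  rw [hphi]
  exact h.comp (Function.LeftInverse.injective (DFunLike.congr_fun hleft))

theorem depends_of_mem_s12 [Group F] {K : Subgroup F} {g : F} (hg : g ∈ K) : Depends K g := by
  intro h
  have : (Coprod.inl ⟨g, hg⟩ : ↥K ∗ FreeGroup Unit) = Coprod.inr (FreeGroup.of ()) :=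
    h (by simp [phi])
  simpa using congrArg Coprod.snd this

/-- An element of a free factor decomposition `K ∗ K'` in a torsion-free group that depends on `K`
lies in `K`. -/
theorem Depends.mem_of_mem_range [Group F] [IsMulTorsionFree F] {K K' : Subgroup F}
    (h : Function.Injective (Coprod.lift K.subtype K'.subtype)) {g : F} (hg : Depends K g)
    (hmem : g ∈ (Coprod.lift K.subtype K'.subtype).range) : g ∈ K := by
  obtain ⟨x, rfl⟩ := hmem
  rw [← lift_coprodEquivCoprodI] at hg ⊢
  by_cases hx : coprodEquivCoprodI K K' x = 1
  · rw [hx, map_one]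
    exact K.one_mem
  obtain ⟨i, j, w, hw⟩ := CoprodI.NeWord.exists_prod_eq hx
  rw [← hw] at hg ⊢
  rcases w.exists_mul_mul_eq with ⟨a, ha⟩ | ⟨a, b, u, hu⟩
  · rw [ha, CoprodI.lift_of]
    exact a.2
  · refine (hg ?_).elim
    rw [hu, map_mul, map_mul, CoprodI.lift_of, CoprodI.lift_of]
    exact phi_injective_mul_mul (K := K) a b (phi_injective_neWord h u)

/-- a free factor of a dependence-closed subgroup is dependence-closed. -/
theorem depClosed_freeFactor [Group F] [IsFreeGroup F] (H K : Subgroup F)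
    (hH : DepSubgroup H = H) (hK : IsFreeFactorOf K H) :
    DepSubgroup K = K := by
  have := isMulTorsionFree_of_isFreeGroup (F := F)
  refine le_antisymm ((Subgroup.closure_le K).2 fun g hg => ?_)
    fun g hg => Subgroup.subset_closure (depends_of_mem_s12 hg)
  have hgH : g ∈ H := hH ▸ Subgroup.subset_closure (Depends.of_isFreeFactorOf hK hg)
  obtain ⟨-, K', -, hinj, rfl⟩ := hK
  exact Depends.mem_of_mem_range hinj hg hgH
end
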